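/- arXiv:1512.07044 — 2 statements merged into one kernel-verified Lean document; each statement's English description precedes it below -/
import Mathlib

section
/- Groups of non-uniform exponential growth: Let η₊ be the unique positive real root of T³ − T² − 2T − 4 and set α = log 2 / log η₊ ≈ 0.76. Every countable group B embeds as a subgroup of a finitely generated group W of non-uniform exponential growth: for every finite symmetric generating set S of W the exponential growth rate λ_{W,S} = lim_{R→∞} (log v_{W,S}(R))/R is strictly positive, yet the infimum of λ_{W,S} over all finite symmetric generating sets S of W equals 0. Moreover W may be chosen with the following property: there is a constant K such that for every R > 0 there exists a finite symmetric generating set S of W with v_{W,S}(r) ≤ exp(K·r^α) for all r ∈ [0, R]. -/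
/-- The word norm of `g` with respect to a generating set `S`. -/
noncomputable def wordNorm {G : Type*} [Group G] (S : Set G) (g : G) : ℕ :=
  sInf {n | ∃ l : List G, (∀ s ∈ l, s ∈ S) ∧ l.length = n ∧ l.prod = g}

/-- The growth function `v_{G,S}(R) = #{g : ‖g‖_S ≤ R}`. -/
noncomputable def growthFn {G : Type*} [Group G] (S : Set G) (R : ℕ) : ℕ :=
  Nat.card {g : G // wordNorm S g ≤ R}

/-- The growth function `v_{G,S}(R) = #{g : ‖g‖_S ≤ R}` for a real radius `R`. -/
noncomputable def growthFnR {G : Type*} [Group G] (S : Set G) (R : ℝ) : ℕ :=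
  Nat.card {g : G // (wordNorm S g : ℝ) ≤ R}

/-- The exponential growth rate `λ_{G,S}` exists and equals `lam`:
`(log v_{G,S}(R))/R → lam`. -/
def HasGrowthRate {G : Type*} [Group G] (S : Set G) (lam : ℝ) : Prop :=
  Filter.Tendsto (fun R : ℕ => Real.log (growthFn S R : ℝ) / (R : ℝ))
    Filter.atTop (nhds lam)


namespace NUG

open Equiv
open scoped commutatorElement

section Gen

variable {X Y : Type*}

/-- Fibrewise action of a function `X → Perm Y` on `X × Y`. -/
def D (X Y : Type*) : (X → Perm Y) →* Perm (X × Y) where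
  toFun φ := Equiv.prodCongrRight φ
  map_one' := by ext ⟨x, y⟩ <;> rfl
  map_mul' φ ψ := by ext ⟨x, y⟩ <;> rfl

/-- The permutation of `X × Y` induced by a permutation of `X`. -/
def lift (X Y : Type*) : Perm X →* Perm (X × Y) where
  toFun γ := Equiv.prodCongr γ (Equiv.refl Y)
  map_one' := by ext ⟨x, y⟩ <;> rfl
  map_mul' φ ψ := by ext ⟨x, y⟩ <;> rfl

@[simp] lemma D_apply (φ : X → Perm Y) (x : X) (y : Y) : D X Y φ (x, y) = (x, φ x y) := rfl
@[simp] lemma lift_apply (γ : Perm X) (x : X) (y : Y) : lift X Y γ (x, y) = (γ x, y) := rfl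

lemma D_injective : Function.Injective (D X Y) := by
  intro φ ψ h
  funext x
  ext y
  have := congrArg (fun g : Perm (X × Y) => (g (x, y)).2) h
  simpa using this

lemma conj_D (γ : Perm X) (φ : X → Perm Y) :
    lift X Y γ * D X Y φ * (lift X Y γ)⁻¹ = D X Y (fun x => φ (γ⁻¹ x)) := by
  rw [mul_inv_eq_iff_eq_mul]
  ext ⟨x, y⟩ <;> simp

lemma conj_single [DecidableEq X] (γ : Perm X) (p : X) (h : Perm Y) :
    lift X Y γ * D X Y (Pi.mulSingle p h) * (lift X Y γ)⁻¹ = D X Y (Pi.mulSingle (γ p) h) := by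
  rw [conj_D]
  congr 1
  funext x
  by_cases hx : x = γ p
  · subst hx; simp
  · rw [Pi.mulSingle_eq_of_ne hx, Pi.mulSingle_eq_of_ne]
    rintro rfl
    simp at hx

end Gen

section Emb

abbrev A5 : Type := alternatingGroup (Fin 5)

lemma A5_perfect : commutator A5 = ⊤ :=
  commutator_alternatingGroup_eq_top (by simp)

variable (B : Type) [Group B]

abbrev ZB : Type := ℤ × B
abbrev YB : Type := Fin 5 × ZB B

/-- left translation by `b` on the half-line -/
def beta (b : B) : Perm (ZB B) :=
  D ℤ B (fun n => if 0 ≤ n then MulAction.toPermHom B B b else 1)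

def shf : Perm (ZB B) := lift ℤ B (Equiv.addRight 1)

lemma comm_beta (b : B) : ⁅beta B b, shf B⁆ = D ℤ B (Pi.mulSingle 0 (MulAction.toPermHom B B b)) := by
  have : ⁅beta B b, shf B⁆ = beta B b * (shf B * (beta B b)⁻¹ * (shf B)⁻¹) := by
    rw [commutatorElement_def]; group
  rw [this, beta, shf, ← map_inv, conj_D, ← map_mul]
  congr 1
  funext n
  have e : ((Equiv.addRight (1:ℤ))⁻¹ : Perm ℤ) n = n - 1 := by
    rw [Equiv.Perm.inv_def]; simp [sub_eq_add_neg]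
  simp only [Pi.mul_apply, Pi.inv_apply, e]
  rcases lt_trichotomy n 0 with h | h | h
  · rw [if_neg (by omega), if_neg (by omega), Pi.mulSingle_eq_of_ne (by omega)]; simp
  · subst h; simp
  · rw [if_pos (by omega), if_pos (by omega), Pi.mulSingle_eq_of_ne (by omega)]; simp

def gam : Option B → Perm (ZB B)
  | none => shf B
  | some b => beta B b

/-- twisted copies of `A5` -/
def tw (i : Option B) : A5 →* Perm (YB B) :=
  (MulAut.conj (D (Fin 5) (ZB B) (Pi.mulSingle 0 (gam B i)))).toMonoidHom.comp
    ((lift (Fin 5) (ZB B)).comp (alternatingGroup (Fin 5)).subtype)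

def embB : B →* Perm (YB B) :=
  (D (Fin 5) (ZB B)).comp ((MonoidHom.mulSingle (fun _ : Fin 5 => Perm (ZB B)) 0).comp
    ((D ℤ B).comp ((MonoidHom.mulSingle (fun _ : ℤ => Perm B) 0).comp (MulAction.toPermHom B B))))

lemma embB_injective : Function.Injective (embB B) := by
  refine D_injective.comp ((Pi.mulSingle_injective 0).comp (D_injective.comp
    ((Pi.mulSingle_injective 0).comp ?_)))
  exact MulAction.toPerm_injective

lemma tw_quot (i : Option B) (x : A5) (j : Fin 5) (hx : (x : Perm (Fin 5)) 0 = j)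
    (U : Subgroup (Perm (YB B))) (hU : ∀ i x, tw B i x ∈ U) :
    D (Fin 5) (ZB B) (Pi.mulSingle 0 (gam B i) * Pi.mulSingle j (gam B i)⁻¹) ∈ U := by
  have h1 : tw B (some 1) x = lift (Fin 5) (ZB B) x := by
    have : gam B (some 1) = 1 := by
      simp only [gam, beta, map_one, ite_self]
      exact map_one (D ℤ B)
    simp [tw, this]
  have h2 : tw B i x * (tw B (some 1) x)⁻¹ ∈ U := U.mul_mem (hU _ _) (U.inv_mem (hU _ _))
  convert h2 using 1
  rw [h1, map_mul]
  have := conj_single (x : Perm (Fin 5)) 0 (gam B i)⁻¹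
  rw [hx] at this
  rw [← this, Pi.mulSingle_inv, map_inv]
  simp [tw, mul_assoc]

lemma single_disj {I : Type*} [DecidableEq I] {M : Type*} [Group M] (i j k : I) (hij : i ≠ j)
    (hik : i ≠ k) (hjk : j ≠ k) (g h : M) :
    ⁅(Pi.mulSingle i g * Pi.mulSingle j g⁻¹ : I → M), (Pi.mulSingle i h * Pi.mulSingle k h⁻¹ : I → M)⁆
      = Pi.mulSingle i ⁅g, h⁆ := by
  funext x
  simp only [commutatorElement_def, Pi.mul_apply, Pi.inv_apply]
  by_cases h1 : x = i
  · subst h1; simp [hij, hik]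
  by_cases h2 : x = j
  · subst h2; simp [h1, hjk]
  · simp [h1, h2]

lemma embB_mem (b : B) (U : Subgroup (Perm (YB B))) (hU : ∀ i x, tw B i x ∈ U) :
    embB B b ∈ U := by
  obtain ⟨x1, hx1⟩ : ∃ x : A5, (x : Perm (Fin 5)) 0 = 1 :=
    ⟨⟨swap 0 1 * swap 2 3, by rw [Perm.mem_alternatingGroup]; decide⟩, by decide⟩
  obtain ⟨x2, hx2⟩ : ∃ x : A5, (x : Perm (Fin 5)) 0 = 2 :=
    ⟨⟨swap 0 2 * swap 1 3, by rw [Perm.mem_alternatingGroup]; decide⟩, by decide⟩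
  have e1 := tw_quot B (some b) x1 1 hx1 U hU
  have e2 := tw_quot B none x2 2 hx2 U hU
  have e3 := U.mul_mem (U.mul_mem (U.mul_mem e1 e2) (U.inv_mem e1)) (U.inv_mem e2)
  rw [← commutatorElement_def, ← map_commutatorElement, single_disj 0 1 2 (by decide) (by decide) (by decide)] at e3
  simp only [gam] at e3
  rw [comm_beta] at e3
  exact e3

end Emb

lemma exists_seq (B : Type) [Group B] [Countable B] :
    ∃ (Y : Type) (t : ℕ → (A5 →* Perm Y)), (∀ n, ∃ m, n < m ∧ t m = t n) ∧
      ∃ φ : B →* Perm Y, Function.Injective φ ∧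
        ∀ b, ∀ U : Subgroup (Perm Y), (∀ m x, t m x ∈ U) → φ b ∈ U := by
  obtain ⟨e, he⟩ := exists_surjective_nat (Option B)
  refine ⟨YB B, fun m => tw B (e (Nat.unpair m).1), ?_, embB B, embB_injective B, ?_⟩
  · intro n
    refine ⟨Nat.pair (Nat.unpair n).1 (n+1), ?_, by simp⟩
    exact lt_of_lt_of_le (Nat.lt_succ_self n) (Nat.right_le_pair _ _)
  · intro b U hU
    refine embB_mem B b U ?_
    intro i x
    obtain ⟨k, rfl⟩ := he i
    simpa using hU (Nat.pair k 0) x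

section Tree

abbrev X : Type := ℕ → Bool

abbrev K4 : Type := Multiplicative (ZMod 2 × ZMod 2)

def cons (c : Bool) (w : X) : X
  | 0 => c
  | n + 1 => w n

@[simp] lemma cons_zero (c : Bool) (w : X) : cons c w 0 = c := rfl
@[simp] lemma cons_succ (c : Bool) (w : X) (n : ℕ) : cons c w (n + 1) = w n := rfl

lemma cons_eta (w : X) : cons (w 0) (fun n => w (n + 1)) = w := by
  funext n; cases n <;> rfl

lemma exists_cons (w : X) : ∃ c v, w = cons c v := ⟨_, _, (cons_eta w).symm⟩

lemma cons_injective (c : Bool) : Function.Injective (cons c) := by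
  intro v w h
  funext n
  exact congrFun h (n + 1)

/-- the automorphism `b → c → d → b` of the Klein group -/
def sig : K4 →* K4 where
  toFun k := Multiplicative.ofAdd ((k.toAdd.1 + k.toAdd.2, k.toAdd.1) : ZMod 2 × ZMod 2)
  map_one' := by decide
  map_mul' := by decide

/-- whether the left section is `a` -/
def sgn (k : K4) : Bool := decide (k.toAdd.1 = 1)

lemma sgn_mul : ∀ k l : K4, sgn (k * l) = xor (sgn k) (sgn l) := by decide

lemma sig_surj : ∀ k : K4, ∃ l, sig l = k := by decide

def sgnN : ℕ → K4 → Bool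
  | 0, k => sgn k
  | n + 1, k => sgnN n (sig k)

lemma sgnN_mul (n : ℕ) : ∀ k l : K4, sgnN n (k * l) = xor (sgnN n k) (sgnN n l) := by
  induction n with
  | zero => exact sgn_mul
  | succ n ih => intro k l; simp [sgnN, ih]

lemma sgnN_one (n : ℕ) : sgnN n 1 = false := by
  induction n with
  | zero => decide
  | succ n ih => simpa [sgnN] using ih

lemma sgnN_surj (n : ℕ) : ∃ k, sgnN n k = true := by
  induction n with
  | zero => exact ⟨Multiplicative.ofAdd (1, 0), by decide⟩
  | succ n ih =>
    obtain ⟨k, hk⟩ := ih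
    obtain ⟨l, rfl⟩ := sig_surj k
    exact ⟨l, hk⟩

/-- the first zero of `w` is at `i` -/
def fz (w : X) (i : ℕ) : Prop := w i = false ∧ ∀ j < i, w j = true

instance (w : X) (i : ℕ) : Decidable (fz w i) := by unfold fz; infer_instance

lemma fz_unique {w : X} {i j : ℕ} (hi : fz w i) (hj : fz w j) : i = j := by
  rcases lt_trichotomy i j with h | h | h
  · have := hj.2 i h; rw [hi.1] at this; simp at this
  · exact h
  · have := hi.2 j h; rw [hj.1] at this; simp at this

lemma fz_cons_true (w : X) (i : ℕ) : fz (cons true w) (i + 1) ↔ fz w i := by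
  constructor
  · rintro ⟨h1, h2⟩
    exact ⟨h1, fun j hj => h2 (j + 1) (by omega)⟩
  · rintro ⟨h1, h2⟩
    refine ⟨h1, fun j hj => ?_⟩
    cases j with
    | zero => rfl
    | succ j => exact h2 j (by omega)

lemma fz_cons_true_zero (w : X) : ¬ fz (cons true w) 0 := by
  rintro ⟨h, _⟩; simp at h

lemma fz_cons_false_succ (w : X) (i : ℕ) : ¬ fz (cons false w) (i + 1) := by
  rintro ⟨_, h⟩; have := h 0 (by omega); simp at this

lemma fz_cons_false_zero (w : X) : fz (cons false w) 0 :=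
  ⟨rfl, fun j hj => by omega⟩

def act (k : K4) (w : X) : X
  | 0 => w 0
  | i + 1 => xor (w (i + 1)) (decide (fz w i) && sgnN i k)

def flip0 (w : X) : X
  | 0 => !(w 0)
  | i + 1 => w (i + 1)

@[simp] lemma flip0_cons (c : Bool) (w : X) : flip0 (cons c w) = cons (!c) w := by
  funext n; cases n <;> rfl

lemma act_cons_true (k : K4) (w : X) : act k (cons true w) = cons true (act (sig k) w) := by
  funext n
  match n with
  | 0 => rfl
  | 1 => simp [act, fz_cons_true_zero]
  | n + 2 => simp [act, fz_cons_true, sgnN]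

lemma act_cons_false (k : K4) (w : X) :
    act k (cons false w) = cons false (if sgn k then flip0 w else w) := by
  funext n
  match n with
  | 0 => rfl
  | 1 =>
    simp only [act, fz_cons_false_zero, cons_succ, sgnN]
    cases sgn k <;> simp [flip0]
  | n + 2 =>
    simp only [act, fz_cons_false_succ, cons_succ]
    cases sgn k <;> simp [flip0]

lemma fz_act (k : K4) (w : X) (i : ℕ) : fz (act k w) i ↔ fz w i := by
  induction i generalizing k w with
  | zero => simp [fz, act]
  | succ i ih =>
    obtain ⟨c, w, rfl⟩ := exists_cons w
    cases c
    · rw [act_cons_false]; simp [fz_cons_false_succ]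
    · rw [act_cons_true, fz_cons_true, fz_cons_true, ih]

lemma act_mul (k l : K4) (w : X) : act (k * l) w = act k (act l w) := by
  funext n
  cases n with
  | zero => rfl
  | succ i =>
    simp only [act, fz_act, sgnN_mul]
    cases (sgnN i k) <;> cases (sgnN i l) <;> cases (decide (fz w i)) <;> simp

lemma act_one (w : X) : act 1 w = w := by
  funext n
  cases n <;> simp [act, sgnN_one]

def kP : K4 →* Perm X :=
  MonoidHom.toHomPerm (α := X)
    { toFun := fun k => (act k : X → X)
      map_one' := funext act_one
      map_mul' := fun k l => funext (act_mul k l) }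

@[simp] lemma kP_apply (k : K4) (w : X) : kP k w = act k w := rfl

lemma flip0_flip0 (w : X) : flip0 (flip0 w) = w := by
  funext n; cases n <;> simp [flip0]

def aP : Perm X := ⟨flip0, flip0, flip0_flip0, flip0_flip0⟩

@[simp] lemma aP_apply (w : X) : aP w = flip0 w := rfl

def G : Subgroup (Perm X) := Subgroup.closure (insert aP (Set.range kP))

lemma aP_mem : aP ∈ G := Subgroup.subset_closure (Set.mem_insert _ _)
lemma kP_mem (k : K4) : kP k ∈ G := Subgroup.subset_closure (Set.mem_insert_of_mem _ ⟨k, rfl⟩)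

lemma section_surj {γ : Perm X} (hγ : γ ∈ G) :
    ∃ δ ∈ G, ∀ w, δ (cons true w) = cons true (γ w) := by
  induction hγ using Subgroup.closure_induction with
  | mem x hx =>
    rcases hx with rfl | ⟨k, rfl⟩
    · refine ⟨aP * kP (Multiplicative.ofAdd (1, 0)) * aP,
        G.mul_mem (G.mul_mem aP_mem (kP_mem _)) aP_mem, ?_⟩
      intro w
      have : sgn (Multiplicative.ofAdd (1, 0)) = true := by decide
      simp [act_cons_false, this]
    · obtain ⟨l, rfl⟩ := sig_surj k
      exact ⟨kP l, kP_mem l, fun w => by simp [act_cons_true]⟩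
  | one => exact ⟨1, G.one_mem, fun w => rfl⟩
  | mul x y _ _ hx hy =>
    obtain ⟨x', hx', ex⟩ := hx
    obtain ⟨y', hy', ey⟩ := hy
    exact ⟨x' * y', G.mul_mem hx' hy', fun w => by simp [ex, ey]⟩
  | inv x _ hx =>
    obtain ⟨x', hx', ex⟩ := hx
    refine ⟨x'⁻¹, G.inv_mem hx', fun w => ?_⟩
    rw [Perm.inv_eq_iff_eq, ex]; simp

/-- prepend `n` ones -/
def ones (n : ℕ) (w : X) : X := (cons true)^[n] w

lemma ones_succ (n : ℕ) (w : X) : ones (n + 1) w = cons true (ones n w) := by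
  simp [ones, Function.iterate_succ_apply']

lemma ones_zero (w : X) : ones 0 w = w := rfl

lemma ones_succ_in (n : ℕ) (w : X) : ones (n + 1) w = ones n (cons true w) := by
  simp [ones]

lemma section_surjN (n : ℕ) {γ : Perm X} (hγ : γ ∈ G) :
    ∃ δ ∈ G, ∀ w, δ (ones n w) = ones n (γ w) := by
  induction n with
  | zero => exact ⟨γ, hγ, fun w => rfl⟩
  | succ n ih =>
    obtain ⟨δ, hδ, h⟩ := ih
    obtain ⟨δ', hδ', h'⟩ := section_surj hδ
    exact ⟨δ', hδ', fun w => by rw [ones_succ, h', h, ones_succ]⟩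

def rho : X := fun _ => true

lemma cons_rho : cons true rho = rho := by funext n; cases n <;> rfl

lemma act_rho (k : K4) : act k rho = rho := by
  funext n
  cases n with
  | zero => rfl
  | succ n =>
    have : ¬ fz rho n := fun h => by simpa [rho] using h.1
    simp [act, this, rho]

lemma flip0_rho : flip0 rho = cons false rho := by
  rw [← cons_rho, flip0_cons, cons_rho]; rfl

/-- the points carrying the function `f` -/
def pt (n : ℕ) (c : Bool) : X := ones n (cons false (cons c rho))

lemma pt_succ (n : ℕ) (c : Bool) : pt (n + 1) c = cons true (pt n c) := ones_succ _ _

lemma act_pt (n : ℕ) (k : K4) (c : Bool) : act k (pt n c) = pt n (xor c (sgnN n k)) := by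
  induction n generalizing k with
  | zero =>
    simp only [pt, ones_zero, act_cons_false, sgnN]
    cases sgn k <;> simp
  | succ n ih => simp only [pt_succ, act_cons_true, ih, sgnN]

lemma fz_pt (n : ℕ) (c : Bool) : fz (pt n c) n := by
  induction n with
  | zero => exact fz_cons_false_zero _
  | succ n ih => rw [pt_succ, fz_cons_true]; exact ih

lemma pt_inj {n m : ℕ} {c c' : Bool} (h : pt n c = pt m c') : n = m ∧ c = c' := by
  have h1 := fz_pt n c
  rw [h] at h1
  obtain rfl := fz_unique h1 (fz_pt m c')
  refine ⟨rfl, ?_⟩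
  have := (Function.Injective.iterate (cons_injective true) n) h
  exact congrFun this 1

lemma orbit_pt (n m : ℕ) (c c' : Bool) : ∃ γ ∈ G, γ (pt n c) = pt m c' := by
  have h1 : ∀ n c c', ∃ γ ∈ G, γ (pt n c) = pt n c' := by
    intro n c c'
    by_cases h : c = c'
    · exact ⟨1, G.one_mem, by simp [h]⟩
    · obtain ⟨k, hk⟩ := sgnN_surj n
      refine ⟨kP k, kP_mem k, ?_⟩
      rw [kP_apply, act_pt, hk]
      congr 1
      revert h; cases c <;> cases c' <;> simp
  have h2 : ∀ n, ∃ γ ∈ G, γ (pt 0 true) = pt n true := by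
    intro n
    induction n with
    | zero => exact ⟨1, G.one_mem, rfl⟩
    | succ n ih =>
      obtain ⟨γ, hγ, e⟩ := ih
      obtain ⟨γ2, hγ2, e2⟩ := h1 n true false
      obtain ⟨γ3, hγ3, e3⟩ := section_surjN n aP_mem
      refine ⟨γ3 * γ2 * γ, G.mul_mem (G.mul_mem hγ3 hγ2) hγ, ?_⟩
      simp only [Perm.mul_apply, e, e2]
      rw [pt, e3, aP_apply, flip0_cons, pt, ones_succ_in, cons_rho]
      congr 2
  obtain ⟨γ1, hγ1, e1⟩ := h1 n c true
  obtain ⟨γ2, hγ2, e2⟩ := h2 n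
  obtain ⟨γ3, hγ3, e3⟩ := h2 m
  obtain ⟨γ4, hγ4, e4⟩ := h1 m true c'
  refine ⟨γ4 * γ3 * γ2⁻¹ * γ1, G.mul_mem (G.mul_mem (G.mul_mem hγ4 hγ3) (G.inv_mem hγ2)) hγ1, ?_⟩
  have : γ2⁻¹ (pt n true) = pt 0 true := by rw [Perm.inv_eq_iff_eq, e2]
  simp only [Perm.mul_apply, e1, this, e3, e4]

end Tree

section Func

variable {A : Type} [Group A] {Y : Type}

open Classical in
noncomputable def phi (t : ℕ → (A →* Perm Y)) (w : X) : A →* Perm Y :=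
  if h : ∃ m c, w = pt m c then t h.choose else 1

lemma phi_pt (t : ℕ → (A →* Perm Y)) (m : ℕ) (c : Bool) : phi t (pt m c) = t m := by
  have h : ∃ m' c', pt m c = pt m' c' := ⟨m, c, rfl⟩
  rw [phi, dif_pos h]
  obtain ⟨c', hc'⟩ := h.choose_spec
  rw [← (pt_inj hc').1]

lemma phi_not (t : ℕ → (A →* Perm Y)) (w : X) (h : ∀ m c, w ≠ pt m c) : phi t w = 1 := by
  rw [phi, dif_neg]
  push Not
  exact h

lemma phi_act (t : ℕ → (A →* Perm Y)) (k : K4) (w : X) : phi t (act k w) = phi t w := by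
  by_cases h : ∃ m c, w = pt m c
  · obtain ⟨m, c, rfl⟩ := h
    rw [act_pt, phi_pt, phi_pt]
  · push Not at h
    rw [phi_not t w h, phi_not]
    intro m c e
    apply h m (xor c (sgnN m k⁻¹))
    rw [← act_pt, ← e, ← act_mul, inv_mul_cancel, act_one]

lemma phi_cons_true (t : ℕ → (A →* Perm Y)) (w : X) :
    phi t (cons true w) = phi (fun n => t (n + 1)) w := by
  by_cases h : ∃ m c, w = pt m c
  · obtain ⟨m, c, rfl⟩ := h
    rw [← pt_succ, phi_pt, phi_pt]
  · push Not at h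
    rw [phi_not _ w h, phi_not]
    intro m c e
    cases m with
    | zero => have := congrFun e 0; simp [pt, ones_zero] at this
    | succ m => rw [pt_succ] at e; exact h m c (cons_injective _ e)

lemma phi_cons_false (t : ℕ → (A →* Perm Y)) (w : X) (ht : t 0 = 1) :
    phi t (cons false w) = 1 := by
  by_cases h : ∃ m c, cons false w = pt m c
  · obtain ⟨m, c, e⟩ := h
    rw [e, phi_pt]
    cases m with
    | zero => exact ht
    | succ m => rw [pt_succ] at e; have := congrFun e 0; simp at this
  · push Not at h
    exact phi_not _ _ h

noncomputable def vH (t : ℕ → (A →* Perm Y)) : K4 × A →* Perm (X × Y) :=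
  MonoidHom.toHomPerm (α := X × Y)
    { toFun := fun v => ((fun z => (act v.1 z.1, phi t z.1 v.2 z.2)) : X × Y → X × Y)
      map_one' := by
        funext z
        simp only [Prod.fst_one, Prod.snd_one, act_one, map_one]
        rfl
      map_mul' := by
        intro u v
        funext z
        show _ = (act u.1 (act v.1 z.1), phi t (act v.1 z.1) u.2 (phi t z.1 v.2 z.2))
        simp only [Prod.fst_mul, Prod.snd_mul, act_mul, map_mul, phi_act]
        rfl }

lemma vH_apply (t : ℕ → (A →* Perm Y)) (v : K4 × A) (w : X) (y : Y) :
    vH t v (w, y) = (act v.1 w, phi t w v.2 y) := rfl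

abbrev aL (Y : Type) : Perm (X × Y) := lift X Y aP

lemma aL_apply (w : X) (y : Y) : aL Y (w, y) = (flip0 w, y) := rfl

lemma aL_sq : aL Y * aL Y = 1 := by
  ext ⟨w, y⟩ <;> simp [flip0_flip0]

/-- the generating set -/
def gens (t : ℕ → (A →* Perm Y)) : Set (Perm (X × Y)) := insert (aL Y) (Set.range (vH t))

def WW (t : ℕ → (A →* Perm Y)) : Subgroup (Perm (X × Y)) := Subgroup.closure (gens t)

lemma vH_mem (t : ℕ → (A →* Perm Y)) (v : K4 × A) : vH t v ∈ WW t :=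
  Subgroup.subset_closure (Set.mem_insert_of_mem _ ⟨v, rfl⟩)

lemma aL_mem (t : ℕ → (A →* Perm Y)) : aL Y ∈ WW t :=
  Subgroup.subset_closure (Set.mem_insert _ _)

lemma vH_fst (t : ℕ → (A →* Perm Y)) (k : K4) : vH t (k, 1) = lift X Y (kP k) := by
  ext ⟨w, y⟩ <;> simp [vH_apply]

lemma vH_snd (t : ℕ → (A →* Perm Y)) (x : A) : vH t (1, x) = D X Y (fun w => phi t w x) := by
  ext ⟨w, y⟩ <;> simp [vH_apply, act_one]

lemma lift_mem (t : ℕ → (A →* Perm Y)) {γ : Perm X} (hγ : γ ∈ G) : lift X Y γ ∈ WW t := by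
  have : G ≤ (WW t).comap (lift X Y) := by
    rw [G, Subgroup.closure_le]
    rintro g (rfl | ⟨k, rfl⟩)
    · exact aL_mem t
    · show lift X Y (kP k) ∈ WW t
      rw [← vH_fst t]; exact vH_mem t _
  exact this hγ

lemma WW_le {t : ℕ → (A →* Perm Y)} (U : Subgroup (Perm (X × Y)))
    (hG : ∀ γ ∈ G, lift X Y γ ∈ U) (hf : ∀ x, D X Y (fun w => phi t w x) ∈ U) : WW t ≤ U := by
  rw [WW, Subgroup.closure_le]
  rintro g (rfl | ⟨⟨k, x⟩, rfl⟩)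
  · exact hG _ aP_mem
  · have : ((k, x) : K4 × A) = (k, 1) * (1, x) := by simp
    rw [this, map_mul, vH_fst, vH_snd]
    exact U.mul_mem (hG _ (kP_mem k)) (hf x)

/-- truncation -/
def tr (n : ℕ) (t : ℕ → (A →* Perm Y)) : ℕ → (A →* Perm Y) := fun j => if j < n then 1 else t j

noncomputable instance : DecidableEq X := Classical.decEq _

lemma single_conj_mem (t : ℕ → (A →* Perm Y)) (n m : ℕ) (c c' : Bool) (h : Perm Y)
    (hh : D X Y (Pi.mulSingle (pt n c) h) ∈ WW t) :
    D X Y (Pi.mulSingle (pt m c') h) ∈ WW t := by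
  obtain ⟨γ, hγ, e⟩ := orbit_pt n m c c'
  rw [← e, ← conj_single]
  exact (WW t).mul_mem ((WW t).mul_mem (lift_mem t hγ) hh) ((WW t).inv_mem (lift_mem t hγ))

/-- `w` outside the subtree below `1^n` carries nothing. -/
lemma phi_tr_cases (t : ℕ → (A →* Perm Y)) (n : ℕ) (w : X) :
    phi (tr n t) w = 1 ∨ (∃ v, w = ones n (cons true v)) ∨ ∃ c, w = pt n c := by
  by_cases h : ∃ m c, w = pt m c
  · obtain ⟨m, c, rfl⟩ := h
    rw [phi_pt]
    rcases lt_trichotomy m n with h | h | h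
    · left; simp [tr, h]
    · subst h; right; right; exact ⟨c, rfl⟩
    · right; left
      obtain ⟨d, rfl⟩ := Nat.exists_eq_add_of_lt h
      refine ⟨pt d c, ?_⟩
      rw [← ones_succ_in]
      simp only [pt, ones, ← Function.iterate_add_apply]
      rw [show n + d + 1 = n + 1 + d by omega]
  · push Not at h
    left; exact phi_not _ _ h

lemma single_mem_comm (t : ℕ → (A →* Perm Y)) (n : ℕ) (x y : A) :
    D X Y (Pi.mulSingle (pt n false) (t n ⁅x, y⁆)) ∈ WW (tr n t) := by
  set kd : K4 := Multiplicative.ofAdd (0, 1) with hkd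
  obtain ⟨γ, hγ, e⟩ := section_surjN n
    (G.mul_mem (G.mul_mem aP_mem (kP_mem kd)) aP_mem)
  have hs : sgn kd = false := by decide
  have hs2 : sgn (sig kd) = true := by decide
  have hs3 : kd * kd = 1 := by decide
  set U := WW (tr n t) with hU
  have e1 : ∀ v, γ (ones n (cons true v)) = ones n (cons true v) := by
    intro v; rw [e]; simp [act_cons_false, hs]
  have e0 : ∀ v, γ (ones n (cons false v)) = ones n (cons false (act (sig kd) v)) := by
    intro v; rw [e]; simp [act_cons_true]
  have i1 : ∀ v, γ⁻¹ (ones n (cons true v)) = ones n (cons true v) := by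
    intro v; rw [Perm.inv_eq_iff_eq, e1]
  have i2 : γ⁻¹ (pt n true) = pt n true := by
    rw [Perm.inv_eq_iff_eq, pt, e0, cons_rho, act_rho]
  have i3 : phi (tr n t) (γ⁻¹ (pt n false)) = 1 := by
    have : γ⁻¹ (pt n false) = ones n (cons false (cons false (cons false rho))) := by
      rw [Perm.inv_eq_iff_eq, e0, act_cons_false, hs2, pt, if_pos rfl, flip0_cons]
      simp [cons_rho]
    rw [this]
    apply phi_not
    intro m c h
    have hf : fz (ones n (cons false (cons false (cons false rho)))) n := by
      have : ∀ m v, fz (ones m (cons false v)) m := by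
        intro m v
        induction m with
        | zero => exact fz_cons_false_zero _
        | succ m ih => rw [ones_succ, fz_cons_true]; exact ih
      exact this _ _
    rw [h] at hf
    obtain rfl := fz_unique hf (fz_pt m c)
    have h3 := (Function.Injective.iterate (cons_injective true) _) h
    have := congrFun h3 2
    simp [rho] at this
  have m1 : D X Y (fun w => phi (tr n t) w x) ∈ U := by rw [← vH_snd]; exact vH_mem _ _
  have m2 : D X Y (fun w => phi (tr n t) (γ⁻¹ w) y) ∈ U := by
    rw [← conj_D γ (fun w => phi (tr n t) w y), ← vH_snd]
    exact U.mul_mem (U.mul_mem (lift_mem _ hγ) (vH_mem _ _)) (U.inv_mem (lift_mem _ hγ))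
  have m3 : D X Y (fun w => phi (tr n t) w ⁅x, y⁆) ∈ U := by rw [← vH_snd]; exact vH_mem _ _
  have m4 := U.mul_mem (U.mul_mem (U.mul_mem m1 m2) (U.inv_mem m1)) (U.inv_mem m2)
  rw [← commutatorElement_def, ← map_commutatorElement] at m4
  have m5 := U.mul_mem (U.inv_mem m4) m3
  rw [← map_inv, ← map_mul] at m5
  convert m5 using 2
  funext w
  simp only [Pi.mul_apply, Pi.inv_apply, commutatorElement_def]
  rcases phi_tr_cases t n w with h | ⟨v, rfl⟩ | ⟨c, rfl⟩
  · have hw : w ≠ pt n false ∨ t n = 1 := by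
      by_cases hw : w = pt n false
      · right; subst hw; rw [phi_pt] at h; simpa [tr] using h
      · left; exact hw
    rw [h]
    rcases hw with hw | hw
    · simp [Pi.mulSingle_eq_of_ne hw]
    · rw [hw]; simp
  · have hw : ones n (cons true v) ≠ pt n false := by
      intro h
      have h3 := (Function.Injective.iterate (cons_injective true) _) h
      have := congrFun h3 0
      simp at this
    rw [Pi.mulSingle_eq_of_ne hw, i1]
    simp only [map_mul, map_inv]; group
  · cases c
    · rw [i3, phi_pt]
      simp [tr]
    · have hw : pt n true ≠ pt n false := by
        intro h; have := (pt_inj h).2; simp at this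
      rw [Pi.mulSingle_eq_of_ne hw, i2]
      simp only [map_mul, map_inv]; group

lemma single_mem (hA : commutator A = ⊤) (t : ℕ → (A →* Perm Y)) (n : ℕ) (c : Bool) (m : ℕ) (x : A) :
    D X Y (Pi.mulSingle (pt m c) (t n x)) ∈ WW (tr n t) := by
  refine single_conj_mem (tr n t) n m false c _ ?_
  let j : A →* Perm (X × Y) :=
    (D X Y).comp ((MonoidHom.mulSingle (fun _ : X => Perm Y) (pt n false)).comp (t n))
  have : commutator A ≤ (WW (tr n t)).comap j := by
    rw [commutator_eq_closure, Subgroup.closure_le]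
    rintro _ ⟨x, y, rfl⟩
    exact single_mem_comm t n x y
  rw [hA] at this
  exact this (Subgroup.mem_top x)

lemma phi_tr_succ (t : ℕ → (A →* Perm Y)) (n : ℕ) (x : A) :
    (fun w => phi (tr n t) w x) = (fun w => phi (tr (n + 1) t) w x) *
      (Pi.mulSingle (pt n false) (t n x) * Pi.mulSingle (pt n true) (t n x) : X → Perm Y) := by
  have hne : pt n true ≠ pt n false := by
    intro h; have := (pt_inj h).2; simp at this
  funext w
  simp only [Pi.mul_apply]
  by_cases h : ∃ m c, w = pt m c
  · obtain ⟨m, c, rfl⟩ := h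
    rw [phi_pt, phi_pt]
    by_cases hm : m = n
    · subst hm
      cases c
      · simp [tr, hne.symm]
      · simp [tr, hne]
    · have h1 : ∀ c', pt m c ≠ pt n c' := fun c' h => hm (pt_inj h).1
      rw [Pi.mulSingle_eq_of_ne (h1 _), Pi.mulSingle_eq_of_ne (h1 _)]
      have : (m < n) = (m < n + 1) := by
        apply propext; omega
      simp [tr, this]
  · push Not at h
    rw [phi_not _ _ h, phi_not _ _ h, Pi.mulSingle_eq_of_ne (h _ _), Pi.mulSingle_eq_of_ne (h _ _)]
    simp

lemma WW_succ_le (hA : commutator A = ⊤) (t : ℕ → (A →* Perm Y)) (n : ℕ) : WW (tr (n + 1) t) ≤ WW (tr n t) := by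
  refine WW_le _ (fun γ hγ => lift_mem _ hγ) (fun x => ?_)
  have h1 : D X Y (fun w => phi (tr n t) w x) ∈ WW (tr n t) := by
    rw [← vH_snd]; exact vH_mem _ _
  rw [phi_tr_succ, map_mul, map_mul] at h1
  exact ((WW (tr n t)).mul_mem_cancel_right
    ((WW (tr n t)).mul_mem (single_mem hA t n false n x) (single_mem hA t n true n x))).1 h1

lemma WW_anti (hA : commutator A = ⊤) (t : ℕ → (A →* Perm Y)) : Antitone (fun n => WW (tr n t)) :=
  antitone_nat_of_succ_le (WW_succ_le hA t)

lemma WW_le_succ (hA : commutator A = ⊤) (t : ℕ → (A →* Perm Y)) (ht : ∀ n, ∃ m, n < m ∧ t m = t n) (n : ℕ) :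
    WW (tr n t) ≤ WW (tr (n + 1) t) := by
  refine WW_le _ (fun γ hγ => lift_mem _ hγ) (fun x => ?_)
  have h1 : D X Y (fun w => phi (tr (n + 1) t) w x) ∈ WW (tr (n + 1) t) := by
    rw [← vH_snd]; exact vH_mem _ _
  obtain ⟨m, hm, e⟩ := ht n
  have h2 : ∀ c, D X Y (Pi.mulSingle (pt n c) (t n x)) ∈ WW (tr (n + 1) t) := by
    intro c
    rw [← e]
    exact WW_anti hA t (show n + 1 ≤ m from hm) (single_mem hA t m c n x)
  rw [phi_tr_succ, map_mul, map_mul]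
  exact Subgroup.mul_mem _ h1 (Subgroup.mul_mem _ (h2 _) (h2 _))

lemma tr_zero (t : ℕ → (A →* Perm Y)) : tr 0 t = t := by
  funext j; simp [tr]

lemma WW_eq (hA : commutator A = ⊤) (t : ℕ → (A →* Perm Y)) (ht : ∀ n, ∃ m, n < m ∧ t m = t n) (n : ℕ) :
    WW (tr n t) = WW t := by
  induction n with
  | zero => rw [tr_zero]
  | succ n ih => rw [← ih]; exact le_antisymm (WW_succ_le hA t n) (WW_le_succ hA t ht n)

lemma WW_single (hA : commutator A = ⊤) (t : ℕ → (A →* Perm Y)) (m : ℕ) (x : A) :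
    D X Y (Pi.mulSingle (pt 0 true) (t m x)) ∈ WW t := by
  have := WW_anti hA t (Nat.zero_le m) (single_mem hA t m true 0 x)
  simpa only [tr_zero] using this

end Func

section Count

variable {A : Type} [Group A] {Y : Type}

open Classical in
/-- weights of the Klein group elements -/
noncomputable def nK (θ : ℝ) (k : K4) : ℝ :=
  if k = 1 then 0 else if k = Multiplicative.ofAdd (1, 0) then θ ^ 3
    else if k = Multiplicative.ofAdd (1, 1) then 1 - θ ^ 2 else 1 - θ

open Classical in
noncomputable def nV (θ : ℝ) (v : K4 × A) : ℝ :=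
  if v.1 = 1 then (if v.2 = 1 then 0 else 1 - θ) else nK θ v.1

lemma K4_cases (k : K4) : k = 1 ∨ k = Multiplicative.ofAdd (1, 0) ∨
    k = Multiplicative.ofAdd (1, 1) ∨ k = Multiplicative.ofAdd (0, 1) := by
  revert k; decide

lemma nK_one (θ : ℝ) : nK θ 1 = 0 := by simp [nK]
lemma nK_b (θ : ℝ) : nK θ (Multiplicative.ofAdd (1, 0)) = θ ^ 3 := by
  rw [nK, if_neg (by decide), if_pos rfl]
lemma nK_c (θ : ℝ) : nK θ (Multiplicative.ofAdd (1, 1)) = 1 - θ ^ 2 := by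
  rw [nK, if_neg (by decide), if_neg (by decide), if_pos rfl]
lemma nK_d (θ : ℝ) : nK θ (Multiplicative.ofAdd (0, 1)) = 1 - θ := by
  rw [nK, if_neg (by decide), if_neg (by decide), if_neg (by decide)]

variable {θ : ℝ} 

lemma nK_mul (h0 : 0 < θ) (h1 : θ < 1) (hθ : θ ^ 3 + θ ^ 2 + θ = 2) (k l : K4) :
    nK θ (k * l) ≤ nK θ k + nK θ l := by
  have e1 : θ ^ 2 < 1 := by nlinarith
  have e2 : 0 < θ ^ 3 := by positivity
  have m1 : (Multiplicative.ofAdd (1, 0) : K4) * Multiplicative.ofAdd (1, 0) = 1 := by decide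
  have m2 : (Multiplicative.ofAdd (1, 0) : K4) * Multiplicative.ofAdd (1, 1)
    = Multiplicative.ofAdd (0, 1) := by decide
  have m3 : (Multiplicative.ofAdd (1, 0) : K4) * Multiplicative.ofAdd (0, 1)
    = Multiplicative.ofAdd (1, 1) := by decide
  have m4 : (Multiplicative.ofAdd (1, 1) : K4) * Multiplicative.ofAdd (1, 0)
    = Multiplicative.ofAdd (0, 1) := by decide
  have m5 : (Multiplicative.ofAdd (1, 1) : K4) * Multiplicative.ofAdd (1, 1) = 1 := by decide
  have m6 : (Multiplicative.ofAdd (1, 1) : K4) * Multiplicative.ofAdd (0, 1)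
    = Multiplicative.ofAdd (1, 0) := by decide
  have m7 : (Multiplicative.ofAdd (0, 1) : K4) * Multiplicative.ofAdd (1, 0)
    = Multiplicative.ofAdd (1, 1) := by decide
  have m8 : (Multiplicative.ofAdd (0, 1) : K4) * Multiplicative.ofAdd (1, 1)
    = Multiplicative.ofAdd (1, 0) := by decide
  have m9 : (Multiplicative.ofAdd (0, 1) : K4) * Multiplicative.ofAdd (0, 1) = 1 := by decide
  rcases K4_cases k with rfl | rfl | rfl | rfl <;> rcases K4_cases l with rfl | rfl | rfl | rfl <;>
    simp only [one_mul, mul_one, m1, m2, m3, m4, m5, m6, m7, m8, m9, nK_one, nK_b, nK_c, nK_d] <;>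
    nlinarith

lemma nK_ge (h0 : 0 < θ) (h1 : θ < 1) (hθ : θ ^ 3 + θ ^ 2 + θ = 2) (k : K4) (hk : k ≠ 1) :
    1 - θ ≤ nK θ k := by
  have e1 : θ ^ 2 < 1 := by nlinarith
  rcases K4_cases k with rfl | rfl | rfl | rfl
  · exact absurd rfl hk
  · rw [nK_b]; nlinarith
  · rw [nK_c]; nlinarith
  · rw [nK_d]

lemma nV_nonneg (h0 : 0 < θ) (h1 : θ < 1) (hθ : θ ^ 3 + θ ^ 2 + θ = 2) (v : K4 × A) :
    0 ≤ nV θ v := by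
  unfold nV
  split_ifs with h h'
  · exact le_rfl
  · linarith
  · have := nK_ge h0 h1 hθ v.1 h; linarith

lemma nV_le_one (h0 : 0 < θ) (h1 : θ < 1) (v : K4 × A) : nV θ v ≤ 1 := by
  have e3 : θ ^ 3 ≤ 1 := pow_le_one₀ h0.le h1.le
  have e2 : 0 ≤ θ ^ 2 := by positivity
  unfold nV
  split_ifs with h h'
  · exact zero_le_one
  · linarith
  · rcases K4_cases v.1 with e | e | e | e <;> rw [e] <;>
      simp only [nK_one, nK_b, nK_c, nK_d] <;> linarith

lemma nV_mul (h0 : 0 < θ) (h1 : θ < 1) (hθ : θ ^ 3 + θ ^ 2 + θ = 2) (u v : K4 × A) :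
    nV θ (u * v) ≤ nV θ u + nV θ v := by
  obtain ⟨k, x⟩ := u
  obtain ⟨l, y⟩ := v
  have hu := nV_nonneg h0 h1 hθ (k, x)
  have hv := nV_nonneg h0 h1 hθ (l, y)
  by_cases hk : k = 1
  · subst hk
    by_cases hl : l = 1
    · subst hl
      by_cases hx : x = 1
      · subst hx
        have : nV θ (((1, 1) : K4 × A) * (1, y)) = nV θ (1, y) := by
          rw [show ((1, 1) : K4 × A) = 1 from rfl, one_mul]
        linarith
      · by_cases hy : y = 1
        · subst hy
          have : nV θ (((1, x) : K4 × A) * (1, 1)) = nV θ (1, x) := by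
            rw [show ((1, 1) : K4 × A) = 1 from rfl, mul_one]
          linarith
        · simp only [nV, Prod.mk_mul_mk, mul_one, if_true, hx, hy, if_false]
          split_ifs <;> linarith
    · have : nV θ ((1, x) * (l, y)) = nV θ (l, y) := by simp [nV, hl]
      linarith
  · by_cases hl : l = 1
    · subst hl
      have : nV θ ((k, x) * (1, y)) = nV θ (k, x) := by simp [nV, hk]
      linarith
    · have a1 := nK_ge h0 h1 hθ k hk
      have a2 := nK_ge h0 h1 hθ l hl
      have a3 := nK_mul h0 h1 hθ k l
      simp only [nV, Prod.mk_mul_mk, hk, hl, if_false]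
      split_ifs <;> linarith

def sgV (v : K4 × A) : K4 × A := (sig v.1, v.2)

lemma nV_contr (h0 : 0 < θ) (h1 : θ < 1) (hθ : θ ^ 3 + θ ^ 2 + θ = 2) (v : K4 × A) :
    (if sgn v.1 then 1 - θ ^ 3 else 0) + nV θ (sgV v) ≤ θ * ((1 - θ ^ 3) + nV θ v) := by
  obtain ⟨k, x⟩ := v
  have e2 : θ ^ 2 < 1 := by nlinarith
  have e3 : θ ^ 3 < 1 := by nlinarith
  have q : θ ^ 4 + θ ^ 3 + θ ^ 2 = 2 * θ := by
    have : θ * (θ ^ 3 + θ ^ 2 + θ) = θ * 2 := by rw [hθ]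
    linarith [this, show θ * (θ ^ 3 + θ ^ 2 + θ) = θ ^ 4 + θ ^ 3 + θ ^ 2 by ring]
  have s1 : sgn (1 : K4) = false := by decide
  have s2 : sgn (Multiplicative.ofAdd (1, 0) : K4) = true := by decide
  have s3 : sgn (Multiplicative.ofAdd (1, 1) : K4) = true := by decide
  have s4 : sgn (Multiplicative.ofAdd (0, 1) : K4) = false := by decide
  have g2 : sig (Multiplicative.ofAdd (1, 0) : K4) = Multiplicative.ofAdd (1, 1) := by decide
  have g3 : sig (Multiplicative.ofAdd (1, 1) : K4) = Multiplicative.ofAdd (0, 1) := by decide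
  have g4 : sig (Multiplicative.ofAdd (0, 1) : K4) = Multiplicative.ofAdd (1, 0) := by decide
  have n2 : (Multiplicative.ofAdd (1, 0) : K4) ≠ 1 := by decide
  have n3 : (Multiplicative.ofAdd (1, 1) : K4) ≠ 1 := by decide
  have n4 : (Multiplicative.ofAdd (0, 1) : K4) ≠ 1 := by decide
  rcases K4_cases k with rfl | rfl | rfl | rfl
  · by_cases hx : x = 1
    · have : nV θ (sgV ((1, x) : K4 × A)) = 0 := by simp [sgV, nV, hx]
      have h2 : nV θ ((1, x) : K4 × A) = 0 := by simp [nV, hx]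
      rw [this, h2]
      simp only [s1, Bool.false_eq_true, if_false]
      nlinarith
    · have : nV θ (sgV ((1, x) : K4 × A)) = 1 - θ := by simp [sgV, nV, hx]
      have h2 : nV θ ((1, x) : K4 × A) = 1 - θ := by simp [nV, hx]
      rw [this, h2]
      simp only [s1, Bool.false_eq_true, if_false]
      nlinarith
  · simp only [sgV, s2, g2, nV, n2, n3, if_false, if_true, nK_b, nK_c]
    nlinarith
  · simp only [sgV, s3, g3, nV, n3, n4, if_false, if_true, nK_d, nK_c]
    nlinarith
  · simp only [sgV, s4, g4, nV, n2, n4, if_false, nK_d, nK_b]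
    simp
    nlinarith

/-- words `v₁ a v₂ a ⋯ v_n a v` -/
abbrev Wd (A : Type) : Type := List (K4 × A) × (K4 × A)

noncomputable def cost (θ : ℝ) (w : Wd A) : ℝ :=
  (w.1.map (fun v => (1 - θ ^ 3) + nV θ v)).sum + nV θ w.2

noncomputable def ev (t : ℕ → (A →* Perm Y)) (w : Wd A) : Perm (X × Y) :=
  (w.1.map (fun v => vH t v * aL Y)).prod * vH t w.2

def mulA (w : Wd A) : Wd A := (1 :: w.1, w.2)

def mulV (u : K4 × A) : Wd A → Wd A
  | ([], v) => ([], u * v)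
  | (v :: vs, v') => (u * v :: vs, v')

lemma ev_mulA (t : ℕ → (A →* Perm Y)) (w : Wd A) : ev t (mulA w) = aL Y * ev t w := by
  simp [ev, mulA, mul_assoc]

lemma ev_mulV (t : ℕ → (A →* Perm Y)) (u : K4 × A) (w : Wd A) :
    ev t (mulV u w) = vH t u * ev t w := by
  obtain ⟨vs, v⟩ := w
  cases vs <;> simp [ev, mulV, mul_assoc]

lemma ev_one (t : ℕ → (A →* Perm Y)) : ev t (([], 1) : Wd A) = 1 := by simp [ev]

lemma nV_one : nV θ (1 : K4 × A) = 0 := by simp [nV]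

lemma cost_mulA (w : Wd A) : cost θ (mulA w) = (1 - θ ^ 3) + cost θ w := by
  simp [cost, mulA, nV_one]; ring

lemma cost_mulV (h0 : 0 < θ) (h1 : θ < 1) (hθ : θ ^ 3 + θ ^ 2 + θ = 2) (u : K4 × A) (w : Wd A) :
    cost θ (mulV u w) ≤ nV θ u + cost θ w := by
  obtain ⟨vs, v⟩ := w
  cases vs with
  | nil => simpa [cost, mulV] using nV_mul h0 h1 hθ u v
  | cons v' vs =>
    have := nV_mul h0 h1 hθ u v'
    simp [cost, mulV]; linarith

def mulS (e : Bool) (w : Wd A) : Wd A := if e then mulA w else w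

lemma cost_mulS (e : Bool) (w : Wd A) :
    cost θ (mulS e w) = (if e then 1 - θ ^ 3 else 0) + cost θ w := by
  cases e
  · simp [mulS]
  · simp [mulS, cost_mulA]

/-- the letter `v` acting on the two sections: side `c` -/
def side (v : K4 × A) (c : Bool) (w : Wd A) : Wd A :=
  if c then mulV (sgV v) w else mulS (sgn v.1) w

/-- wreath recursion on words -/
def wrec : List (K4 × A) → (K4 × A) → Bool × (Bool → Wd A)
  | [], v => (false, fun c => side v c ([], 1))
  | u :: vs, v => (!(wrec vs v).1,
      fun c => side u (!(xor c (wrec vs v).1)) ((wrec vs v).2 c))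

lemma side_ev (t : ℕ → (A →* Perm Y)) (ht : t 0 = 1) (v : K4 × A) (c : Bool) (w : Wd A)
    (x x' : X) (y y' : Y) (h : ev (fun n => t (n + 1)) w (x, y) = (x', y')) :
    vH t v (cons c x', y') =
      (cons c (ev (fun n => t (n + 1)) (side v c w) (x, y)).1,
        (ev (fun n => t (n + 1)) (side v c w) (x, y)).2) := by
  rw [vH_apply]
  cases c
  · rw [act_cons_false, phi_cons_false t x' ht]
    simp only [side, mulS]
    cases sgn v.1
    · simp [h]
    · simp [ev_mulA, h]
  · rw [act_cons_true, phi_cons_true]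
    simp only [side, if_true, ev_mulV, Perm.mul_apply, h, vH_apply, sgV]

lemma wrec_ev (t : ℕ → (A →* Perm Y)) (ht : t 0 = 1) (vs : List (K4 × A)) (v : K4 × A)
    (c : Bool) (x : X) (y : Y) :
    ev t (vs, v) (cons c x, y) =
      (cons (xor c (wrec vs v).1) (ev (fun n => t (n + 1)) ((wrec vs v).2 c) (x, y)).1,
        (ev (fun n => t (n + 1)) ((wrec vs v).2 c) (x, y)).2) := by
  induction vs with
  | nil =>
    have := side_ev t ht v c ([], 1) x x y y (by rw [ev_one]; rfl)
    simpa [ev, wrec] using this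
  | cons u vs ih =>
    have e : ev t (u :: vs, v) = vH t u * (aL Y * ev t (vs, v)) := by
      simp [ev, mul_assoc]
    rw [e, Perm.mul_apply, Perm.mul_apply, ih, aL_apply, flip0_cons]
    rw [side_ev t ht u _ ((wrec vs v).2 c) x
      (ev (fun n => t (n + 1)) ((wrec vs v).2 c) (x, y)).1 y
      (ev (fun n => t (n + 1)) ((wrec vs v).2 c) (x, y)).2 rfl]
    simp [wrec]

lemma side_cost (h0 : 0 < θ) (h1 : θ < 1) (hθ : θ ^ 3 + θ ^ 2 + θ = 2) (v : K4 × A)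
    (c : Bool) (g : Bool → Wd A) :
    cost θ (side v c (g true)) + cost θ (side v (!c) (g false)) ≤
      cost θ (g true) + cost θ (g false) + θ * ((1 - θ ^ 3) + nV θ v) := by
  have h := nV_contr h0 h1 hθ v
  cases c
  · have := cost_mulV h0 h1 hθ (sgV v) (g false)
    simp only [side, Bool.not_false, if_true, cost_mulS, Bool.false_eq_true, if_false]
    linarith
  · have := cost_mulV h0 h1 hθ (sgV v) (g true)
    simp only [side, Bool.not_true, if_true, cost_mulS, Bool.false_eq_true, if_false]
    linarith

lemma wrec_cost (h0 : 0 < θ) (h1 : θ < 1) (hθ : θ ^ 3 + θ ^ 2 + θ = 2)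
    (vs : List (K4 × A)) (v : K4 × A) :
    cost θ ((wrec vs v).2 true) + cost θ ((wrec vs v).2 false) ≤
      θ * (cost θ (vs, v) + (1 - θ ^ 3)) := by
  induction vs with
  | nil =>
    have := side_cost h0 h1 hθ v true (fun _ => ([], 1))
    simp only [wrec]
    have e : cost θ (([], 1) : Wd A) = 0 := by simp [cost, nV_one]
    have e' : cost θ (([], v) : Wd A) = nV θ v := by simp [cost]
    simp only [e, Bool.not_true] at this
    rw [e']; linarith
  | cons u vs ih =>
    have := side_cost h0 h1 hθ u (!(xor true (wrec vs v).1)) (wrec vs v).2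
    have e : cost θ (u :: vs, v) = ((1 - θ ^ 3) + nV θ u) + cost θ (vs, v) := by
      simp [cost]; ring
    rw [e]
    simp only [wrec]
    have e2 : (!(xor false (wrec vs v).1)) = !(!(xor true (wrec vs v).1)) := by
      cases (wrec vs v).1 <;> rfl
    rw [e2]
    linarith

end Count

section Count2

/-- all lists of length at most `N` -/
def LL (V : Type) [Fintype V] [DecidableEq V] : ℕ → Finset (List V)
  | 0 => {[]}
  | N + 1 => insert [] (Finset.image (fun p : V × List V => p.1 :: p.2) (Finset.univ ×ˢ LL V N))

lemma mem_LL (V : Type) [Fintype V] [DecidableEq V] (N : ℕ) (l : List V) (h : l.length ≤ N) :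
    l ∈ LL V N := by
  induction N generalizing l with
  | zero => simp at h; simp [LL, h]
  | succ N ih =>
    cases l with
    | nil => simp [LL]
    | cons v l =>
      simp only [LL, Finset.mem_insert, Finset.mem_image]
      right
      exact ⟨(v, l), by simpa using ih l (by simpa using h), rfl⟩

lemma sum_LL (V : Type) [Fintype V] [DecidableEq V] [Nonempty V] (N : ℕ) :
    ∑ l ∈ LL V N, ((2 * (Fintype.card V : ℝ))⁻¹) ^ l.length ≤ 2 := by
  have hq : (0 : ℝ) < Fintype.card V := by exact_mod_cast Fintype.card_pos
  induction N with
  | zero => simp [LL]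
  | succ N ih =>
    have hinj : Set.InjOn (fun p : V × List V => p.1 :: p.2)
        (Finset.univ ×ˢ LL V N : Finset (V × List V)) := by
      rintro ⟨a, b⟩ _ ⟨c, d⟩ _ h
      simpa using h
    rw [LL, Finset.sum_insert (by simp), Finset.sum_image hinj, Finset.sum_product]
    simp only [List.length_nil, pow_zero, List.length_cons, pow_succ, ← Finset.sum_mul,
      Finset.sum_const, Finset.card_univ, nsmul_eq_mul]
    set s0 := ∑ l ∈ LL V N, ((2 * (Fintype.card V : ℝ))⁻¹) ^ l.length
    have : (Fintype.card V : ℝ) * s0 * (2 * (Fintype.card V : ℝ))⁻¹ = s0 / 2 := by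
      field_simp
    rw [this]; linarith

lemma count_words (V : Type) [Fintype V] [DecidableEq V] [Nonempty V] (ι : Type) [Fintype ι]
    [DecidableEq ι] (N : ℕ) :
    {w : ι → List V × V | ∑ i, (w i).1.length ≤ N}.Finite ∧
      ({w : ι → List V × V | ∑ i, (w i).1.length ≤ N}.ncard : ℝ) ≤
        (2 * (Fintype.card V : ℝ)) ^ (N + Fintype.card ι) := by
  have hq : (0 : ℝ) < Fintype.card V := by exact_mod_cast Fintype.card_pos
  set q : ℝ := (Fintype.card V : ℝ) with hqdef
  set Q : Finset (ι → List V × V) := Fintype.piFinset (fun _ => LL V N ×ˢ Finset.univ) with hQ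
  set P := Q.filter (fun w => ∑ i, (w i).1.length ≤ N) with hP
  have e : {w : ι → List V × V | ∑ i, (w i).1.length ≤ N} = (P : Set (ι → List V × V)) := by
    ext w
    simp only [Set.mem_ofPred_eq, hP, Finset.coe_filter, hQ, Fintype.mem_piFinset]
    refine ⟨fun h => ⟨fun i => ?_, h⟩, fun h => h.2⟩
    rw [Finset.mem_product]
    refine ⟨mem_LL _ _ _ (le_trans ?_ h), Finset.mem_univ _⟩
    exact Finset.single_le_sum (f := fun i => (w i).1.length) (fun _ _ => Nat.zero_le _)
      (Finset.mem_univ i)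
  rw [e]
  refine ⟨P.finite_toSet, ?_⟩
  rw [Set.ncard_coe_finset]
  have hx : (0 : ℝ) < (2 * q)⁻¹ := by positivity
  calc (P.card : ℝ) = ∑ w ∈ P, (1 : ℝ) := by simp
    _ ≤ ∑ w ∈ P, (2 * q) ^ N * ∏ i, ((2 * q)⁻¹) ^ (w i).1.length := by
        refine Finset.sum_le_sum (fun w hw => ?_)
        have hw' : ∑ i, (w i).1.length ≤ N := (Finset.mem_filter.1 hw).2
        rw [Finset.prod_pow_eq_pow_sum, inv_pow, ← div_eq_mul_inv, one_le_div (by positivity)]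
        refine pow_le_pow_right₀ ?_ hw'
        have : (1 : ℝ) ≤ q := by
          rw [hqdef]; exact_mod_cast Fintype.card_pos
        linarith
    _ ≤ ∑ w ∈ Q, (2 * q) ^ N * ∏ i, ((2 * q)⁻¹) ^ (w i).1.length := by
        refine Finset.sum_le_sum_of_subset_of_nonneg (Finset.filter_subset _ _) ?_
        intro w _ _
        positivity
    _ = (2 * q) ^ N * ∏ _i : ι, ∑ p ∈ LL V N ×ˢ (Finset.univ : Finset V),
          ((2 * q)⁻¹) ^ p.1.length := by
        rw [← Finset.mul_sum, Finset.prod_univ_sum]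
    _ ≤ (2 * q) ^ N * (2 * q) ^ Fintype.card ι := by
        gcongr
        rw [Finset.prod_const, Finset.card_univ]
        gcongr
        rw [Finset.sum_product]
        simp only [Finset.sum_const, Finset.card_univ, nsmul_eq_mul, ← Finset.mul_sum]
        have := sum_LL V N
        exact (mul_le_mul_of_nonneg_left this hq.le).trans_eq (mul_comm _ _)
    _ = _ := by rw [pow_add]

variable {A : Type} [Group A] {Y : Type} {θ : ℝ}

/-- tuples of elements of total weight at most `T` -/
def Tup (θ : ℝ) (t : ℕ → (A →* Perm Y)) (ι : Type) [Fintype ι] (T : ℝ) :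
    Set (ι → (X × Y → X × Y)) :=
  {h | ∃ w : ι → Wd A, (∀ i, h i = ⇑(ev t (w i))) ∧ ∑ i, cost θ (w i) ≤ T}

lemma len_cost (h0 : 0 < θ) (h1 : θ < 1) (hθ : θ ^ 3 + θ ^ 2 + θ = 2) (w : Wd A) :
    (w.1.length : ℝ) * (1 - θ ^ 3) ≤ cost θ w := by
  obtain ⟨vs, v⟩ := w
  induction vs with
  | nil => simpa [cost] using nV_nonneg h0 h1 hθ v
  | cons u vs ih =>
    have := nV_nonneg h0 h1 hθ u
    simp only [cost, List.map_cons, List.sum_cons, List.length_cons, Nat.cast_add, Nat.cast_one]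
      at ih ⊢
    linarith

lemma tup_base [Fintype A] (h0 : 0 < θ) (h1 : θ < 1) (hθ : θ ^ 3 + θ ^ 2 + θ = 2)
    (t : ℕ → (A →* Perm Y)) (ι : Type) [Fintype ι] (T : ℝ)
    (hT : T ≤ Fintype.card ι * 2) :
    (Tup θ t ι T).Finite ∧ ((Tup θ t ι T).ncard : ℝ) ≤
      ((2 * (Fintype.card (K4 × A) : ℝ)) ^ (⌈2 / (1 - θ ^ 3)⌉₊ + 1)) ^ (Fintype.card ι) := by
  classical
  have ha : 0 < 1 - θ ^ 3 := by
    have : θ ^ 3 < 1 := pow_lt_one₀ h0.le h1 (by norm_num)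
    linarith
  set N1 := ⌈2 / (1 - θ ^ 3)⌉₊ with hN1
  obtain ⟨f1, f2⟩ := count_words (K4 × A) ι (Fintype.card ι * N1)
  set P := {w : ι → Wd A | ∑ i, (w i).1.length ≤ Fintype.card ι * N1} with hP
  have hsub : Tup θ t ι T ⊆ (fun w : ι → Wd A => fun i => ⇑(ev t (w i))) '' P := by
    rintro h ⟨w, hw, hc⟩
    refine ⟨w, ?_, funext fun i => (hw i).symm⟩
    have s1 : ∑ i, ((w i).1.length : ℝ) * (1 - θ ^ 3) ≤ (Fintype.card ι : ℝ) * 2 :=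
      le_trans (Finset.sum_le_sum fun i _ => len_cost h0 h1 hθ (w i)) (hc.trans hT)
    rw [← Finset.sum_mul, ← le_div_iff₀ ha, mul_div_assoc] at s1
    have s2 : ∑ i, ((w i).1.length : ℝ) ≤ (Fintype.card ι : ℝ) * (N1 : ℝ) := by
      refine s1.trans ?_
      gcongr
      exact Nat.le_ceil _
    show ∑ i, (w i).1.length ≤ Fintype.card ι * N1
    exact_mod_cast s2
  refine ⟨(f1.image _).subset hsub, ?_⟩
  calc ((Tup θ t ι T).ncard : ℝ) ≤ (((fun w : ι → Wd A => fun i => ⇑(ev t (w i))) '' P).ncard : ℝ) := by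
        exact_mod_cast Set.ncard_le_ncard hsub (f1.image _)
    _ ≤ (P.ncard : ℝ) := by exact_mod_cast Set.ncard_image_le f1
    _ ≤ _ := f2
    _ = _ := by rw [← pow_mul]; congr 1; ring

/-- reassembling an element from its sections -/
def Psi {ι : Type} (p : (ι → Bool) × (ι × Bool → (X × Y → X × Y))) : ι → (X × Y → X × Y) :=
  fun i z => (cons (xor (z.1 0) (p.1 i)) (p.2 (i, z.1 0) (fun n => z.1 (n + 1), z.2)).1,
    (p.2 (i, z.1 0) (fun n => z.1 (n + 1), z.2)).2)

lemma tup_step (h0 : 0 < θ) (h1 : θ < 1) (hθ : θ ^ 3 + θ ^ 2 + θ = 2)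
    (t : ℕ → (A →* Perm Y)) (ht : t 0 = 1) (ι : Type) [Fintype ι] (T : ℝ) :
    Tup θ t ι T ⊆ Psi '' ((Set.univ : Set (ι → Bool)) ×ˢ
      Tup θ (fun n => t (n + 1)) (ι × Bool) (θ * (T + Fintype.card ι * (1 - θ ^ 3)))) := by
  rintro h ⟨w, hw, hc⟩
  refine ⟨(fun i => (wrec (w i).1 (w i).2).1,
    fun j => ⇑(ev (fun n => t (n + 1)) ((wrec (w j.1).1 (w j.1).2).2 j.2))), ⟨Set.mem_univ _, ?_⟩, ?_⟩
  · refine ⟨fun j => (wrec (w j.1).1 (w j.1).2).2 j.2, fun j => rfl, ?_⟩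
    rw [Fintype.sum_prod_type]
    simp only [Fintype.sum_bool]
    calc _ ≤ ∑ i, θ * (cost θ (w i) + (1 - θ ^ 3)) :=
          Finset.sum_le_sum fun i _ => wrec_cost h0 h1 hθ (w i).1 (w i).2
      _ = θ * (∑ i, cost θ (w i) + Fintype.card ι * (1 - θ ^ 3)) := by
          rw [← Finset.mul_sum, Finset.sum_add_distrib]
          simp only [Finset.sum_const, Finset.card_univ, nsmul_eq_mul]
      _ ≤ _ := by gcongr
  · funext i
    rw [hw i]
    funext ⟨z, y⟩
    have := wrec_ev t ht (w i).1 (w i).2 (z 0) (fun n => z (n + 1)) y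
    rw [cons_eta] at this
    exact this.symm

lemma tup_bound [Fintype A] (h0 : 0 < θ) (h1 : θ < 1) (hθ : θ ^ 3 + θ ^ 2 + θ = 2)
    (η : ℝ) (hη : 2 < η) (he : θ * η = 2) (M : ℝ)
    (hM : M = (2 * (Fintype.card (K4 × A) : ℝ)) ^ (⌈2 / (1 - θ ^ 3)⌉₊ + 1)) (k : ℕ) :
    ∀ (t : ℕ → (A →* Perm Y)), (∀ j < k, t j = 1) → ∀ (ι : Type) [Fintype ι] (T : ℝ),
      T ≤ Fintype.card ι * (η ^ k + 1) →
      (Tup θ t ι T).Finite ∧ ((Tup θ t ι T).ncard : ℝ) ≤ M ^ (Fintype.card ι * (2 ^ (k + 1) - 1)) := by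
  have hM2 : 2 ≤ M := by
    have hq : (1 : ℝ) ≤ Fintype.card (K4 × A) := by exact_mod_cast Fintype.card_pos
    rw [hM]
    calc (2 : ℝ) ≤ (2 * (Fintype.card (K4 × A) : ℝ)) := by linarith
      _ = (2 * (Fintype.card (K4 × A) : ℝ)) ^ 1 := (pow_one _).symm
      _ ≤ _ := pow_le_pow_right₀ (by linarith) (by omega)
  induction k with
  | zero =>
    intro t _ ι _ T hT
    have := tup_base h0 h1 hθ t ι T (by norm_num at hT; linarith)
    rw [← hM] at this
    simpa using this
  | succ k ih =>
    intro t ht ι _ T hT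
    have hsub := tup_step h0 h1 hθ t (ht 0 (by omega)) ι T
    set T' := θ * (T + Fintype.card ι * (1 - θ ^ 3)) with hT'
    have hb : T' ≤ Fintype.card (ι × Bool) * (η ^ k + 1) := by
      have c : (Fintype.card (ι × Bool) : ℝ) = Fintype.card ι * 2 := by
        simp
      rw [c, hT']
      have h3 : 0 < θ ^ 3 := by positivity
      have hc : (0 : ℝ) ≤ Fintype.card ι := by positivity
      calc θ * (T + Fintype.card ι * (1 - θ ^ 3))
          ≤ θ * (Fintype.card ι * (η ^ (k + 1) + 1) + Fintype.card ι * 1) := by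
            gcongr
            linarith
        _ = Fintype.card ι * ((θ * η) * η ^ k + 2 * θ) := by ring
        _ ≤ Fintype.card ι * (2 * η ^ k + 2) := by
            rw [he]; gcongr; linarith
        _ = _ := by ring
    obtain ⟨f1, f2⟩ := ih (fun n => t (n + 1)) (fun j hj => ht (j + 1) (by omega)) (ι × Bool) T' hb
    have hfin := (Set.finite_univ (α := ι → Bool)).prod f1
    refine ⟨(hfin.image _).subset hsub, ?_⟩
    have s1 : (Tup θ t ι T).ncard ≤ 2 ^ Fintype.card ι *
        (Tup θ (fun n => t (n + 1)) (ι × Bool) T').ncard := by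
      refine (Set.ncard_le_ncard hsub (hfin.image _)).trans ?_
      refine (Set.ncard_image_le hfin).trans ?_
      classical
      rw [Set.ncard_prod, Set.ncard_univ, Nat.card_eq_fintype_card]
      simp
    calc ((Tup θ t ι T).ncard : ℝ) ≤ 2 ^ Fintype.card ι *
        ((Tup θ (fun n => t (n + 1)) (ι × Bool) T').ncard : ℝ) := by exact_mod_cast s1
      _ ≤ M ^ Fintype.card ι * M ^ (Fintype.card (ι × Bool) * (2 ^ (k + 1) - 1)) := by
          gcongr
      _ = _ := by
          rw [← pow_add]
          congr 1
          rw [Fintype.card_prod, Fintype.card_bool, mul_assoc, ← mul_one_add]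
          congr 1
          have : 1 ≤ 2 ^ (k + 1) := Nat.one_le_two_pow
          rw [pow_succ 2 (k + 1)]
          omega

lemma word_of_list (h0 : 0 < θ) (h1 : θ < 1) (hθ : θ ^ 3 + θ ^ 2 + θ = 2)
    (t : ℕ → (A →* Perm Y)) (l : List (Perm (X × Y))) (hl : ∀ s ∈ l, s ∈ gens t) :
    ∃ w : Wd A, ev t w = l.prod ∧ cost θ w ≤ l.length := by
  induction l with
  | nil => exact ⟨([], 1), ev_one t, by simp [cost, nV_one]⟩
  | cons s l ih =>
    obtain ⟨w, e, c⟩ := ih (fun s hs => hl s (List.mem_cons_of_mem _ hs))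
    rcases hl s List.mem_cons_self with rfl | ⟨v, rfl⟩
    · refine ⟨mulA w, by rw [ev_mulA, e, List.prod_cons], ?_⟩
      have : 0 < θ ^ 3 := by positivity
      rw [cost_mulA, List.length_cons]; push_cast; linarith
    · refine ⟨mulV v w, by rw [ev_mulV, e, List.prod_cons], ?_⟩
      have := nV_le_one h0 h1 v
      have := cost_mulV h0 h1 hθ v w
      rw [List.length_cons]; push_cast; linarith

lemma ball_bound [Fintype A] (h0 : 0 < θ) (h1 : θ < 1) (hθ : θ ^ 3 + θ ^ 2 + θ = 2)
    (η : ℝ) (hη : 2 < η) (he : θ * η = 2) (M : ℝ)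
    (hM : M = (2 * (Fintype.card (K4 × A) : ℝ)) ^ (⌈2 / (1 - θ ^ 3)⌉₊ + 1)) (k : ℕ)
    (t : ℕ → (A →* Perm Y)) (ht : ∀ j < k, t j = 1) (r : ℝ) (hr : r ≤ η ^ k) :
    ({g : Perm (X × Y) | ∃ l : List (Perm (X × Y)), (∀ s ∈ l, s ∈ gens t) ∧
      (l.length : ℝ) ≤ r ∧ l.prod = g}).Finite ∧
    (({g : Perm (X × Y) | ∃ l : List (Perm (X × Y)), (∀ s ∈ l, s ∈ gens t) ∧
      (l.length : ℝ) ≤ r ∧ l.prod = g}).ncard : ℝ) ≤ M ^ (2 ^ (k + 1) - 1) := by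
  obtain ⟨f1, f2⟩ := tup_bound h0 h1 hθ η hη he M hM k t ht Unit r (by simp; linarith)
  set S := {g : Perm (X × Y) | ∃ l : List (Perm (X × Y)), (∀ s ∈ l, s ∈ gens t) ∧
      (l.length : ℝ) ≤ r ∧ l.prod = g} with hS
  let j : Perm (X × Y) → (Unit → (X × Y → X × Y)) := fun g _ => ⇑g
  have hj : Function.Injective j := by
    intro g h e
    exact DFunLike.coe_injective (congrFun e ())
  have hm : Set.MapsTo j S (Tup θ t Unit r) := by
    rintro g ⟨l, hl, hr, rfl⟩
    obtain ⟨w, e, c⟩ := word_of_list h0 h1 hθ t l hl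
    exact ⟨fun _ => w, fun _ => by rw [e], by simpa using c.trans hr⟩
  refine ⟨Set.Finite.of_injOn hm hj.injOn f1, ?_⟩
  have := Set.ncard_le_ncard_of_injOn j hm hj.injOn f1
  simp only [Fintype.card_unit, one_mul] at f2
  exact le_trans (by exact_mod_cast this) f2

end Count2

section Growth

open scoped Pointwise

variable {G : Type*} [Group G]

/-- the ball of radius `n` in the word metric -/
def ball (S : Set G) (n : ℕ) : Set G :=
  {g | ∃ l : List G, (∀ s ∈ l, s ∈ S) ∧ l.length ≤ n ∧ l.prod = g}

lemma exists_word {S : Set G} (hs : S⁻¹ = S) (hc : Subgroup.closure S = ⊤) (g : G) :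
    ∃ l : List G, (∀ s ∈ l, s ∈ S) ∧ l.prod = g := by
  have hg : g ∈ Submonoid.closure S := by
    have h := Subgroup.closure_toSubmonoid S
    rw [hs, Set.union_self] at h
    rw [← h, hc]
    trivial
  exact Submonoid.exists_list_of_mem_closure hg

lemma norm_le_iff {S : Set G} (hs : S⁻¹ = S) (hc : Subgroup.closure S = ⊤) (g : G) (n : ℕ) :
    wordNorm S g ≤ n ↔ g ∈ ball S n := by
  constructor
  · intro h
    obtain ⟨l, hl, e⟩ := exists_word hs hc g
    have hne : {n | ∃ l : List G, (∀ s ∈ l, s ∈ S) ∧ l.length = n ∧ l.prod = g}.Nonempty :=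
      ⟨l.length, l, hl, rfl, e⟩
    obtain ⟨l', h1, h2, h3⟩ := Nat.sInf_mem hne
    exact ⟨l', h1, h2.le.trans h, h3⟩
  · rintro ⟨l, h1, h2, h3⟩
    unfold wordNorm
    refine le_trans (Nat.sInf_le ?_) h2
    exact ⟨l, h1, rfl, h3⟩

lemma growthFn_eq {S : Set G} (hs : S⁻¹ = S) (hc : Subgroup.closure S = ⊤) (n : ℕ) :
    growthFn S n = Nat.card (ball S n) := by
  unfold growthFn
  exact Nat.card_congr (Equiv.subtypeEquivRight fun g => norm_le_iff hs hc g n)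

lemma ball_finite {S : Set G} (hf : S.Finite) (n : ℕ) : (ball S n).Finite := by
  induction n with
  | zero =>
    refine (Set.finite_singleton (1 : G)).subset ?_
    rintro g ⟨l, -, h, rfl⟩
    have : l = [] := by simpa using h
    simp [this]
  | succ n ih =>
    refine ((Set.finite_singleton (1 : G)).union (hf.mul ih)).subset ?_
    rintro g ⟨l, hl, h, rfl⟩
    cases l with
    | nil => left; simp
    | cons s l =>
      right
      rw [List.prod_cons]
      exact Set.mul_mem_mul (hl s List.mem_cons_self)
        ⟨l, fun s hs => hl s (List.mem_cons_of_mem _ hs), by simpa using h, rfl⟩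

lemma ball_mul (S : Set G) (m n : ℕ) : ball S (m + n) = ball S m * ball S n := by
  ext g
  constructor
  · rintro ⟨l, hl, h, rfl⟩
    rw [← List.prod_take_mul_prod_drop l m]
    exact Set.mul_mem_mul
      ⟨_, fun s hs => hl s (List.mem_of_mem_take hs), by simp, rfl⟩
      ⟨_, fun s hs => hl s (List.mem_of_mem_drop hs), by simp; omega, rfl⟩
  · rintro ⟨_, ⟨l, h1, h2, rfl⟩, _, ⟨l', h1', h2', rfl⟩, rfl⟩
    refine ⟨l ++ l', ?_, by simp; omega, by simp⟩
    intro s hs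
    rcases List.mem_append.1 hs with h | h
    · exact h1 s h
    · exact h1' s h

lemma one_mem_ball (S : Set G) (n : ℕ) : (1 : G) ∈ ball S n := ⟨[], by simp, by simp, rfl⟩

lemma growthFn_pos {S : Set G} (hf : S.Finite) (hs : S⁻¹ = S) (hc : Subgroup.closure S = ⊤)
    (n : ℕ) : 1 ≤ growthFn S n := by
  rw [growthFn_eq hs hc]
  have := (ball_finite hf n).to_subtype
  have : Nonempty (ball S n) := ⟨⟨1, one_mem_ball S n⟩⟩
  exact Nat.card_pos

lemma exists_rate {S : Set G} (hf : S.Finite) (hs : S⁻¹ = S) (hc : Subgroup.closure S = ⊤) :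
    ∃ lam : ℝ, HasGrowthRate S lam ∧
      ∀ n : ℕ, n ≠ 0 → lam ≤ Real.log (growthFn S n : ℝ) / (n : ℝ) := by
  have hpos : ∀ n, (1 : ℝ) ≤ growthFn S n := fun n => by exact_mod_cast growthFn_pos hf hs hc n
  have hsub : Subadditive (fun n => Real.log (growthFn S n : ℝ)) := by
    intro m n
    have h1 := hpos m
    have h2 := hpos n
    have h3 := hpos (m + n)
    rw [← Real.log_mul (by positivity) (by positivity)]
    refine Real.log_le_log (by positivity) ?_
    have : growthFn S (m + n) ≤ growthFn S m * growthFn S n := by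
      rw [growthFn_eq hs hc, growthFn_eq hs hc, growthFn_eq hs hc, ball_mul]
      exact Set.natCard_mul_le
    exact_mod_cast this
  have hb : BddBelow (Set.range fun n : ℕ => Real.log (growthFn S n : ℝ) / n) := by
    refine ⟨0, ?_⟩
    rintro _ ⟨n, rfl⟩
    exact div_nonneg (Real.log_nonneg (hpos n)) (by positivity)
  exact ⟨hsub.lim, hsub.tendsto_lim hb, fun n hn => hsub.lim_le_div hb hn⟩

lemma pos_word_inj {l l' : List Bool}
    (h : (l.map (FreeGroup.of (α := Bool))).prod = (l'.map FreeGroup.of).prod) : l = l' := by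
  have key : ∀ l : List Bool, (l.map (FreeGroup.of (α := Bool))).prod =
      FreeGroup.mk (l.map fun b => (b, true)) := by
    intro l
    induction l with
    | nil => rfl
    | cons b l ih => rw [List.map_cons, List.prod_cons, ih]; rfl
  have red : ∀ l : List Bool, FreeGroup.IsReduced (l.map fun b => (b, true)) := by
    intro l
    induction l with
    | nil => exact FreeGroup.IsReduced.nil
    | cons b l ih =>
      cases l with
      | nil => exact FreeGroup.IsReduced.singleton
      | cons c l => exact FreeGroup.isReduced_cons_cons.2 ⟨fun _ => rfl, ih⟩
  rw [key, key] at h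
  have := congrArg FreeGroup.toWord h
  rw [FreeGroup.toWord_mk, FreeGroup.toWord_mk, (red l).reduce_eq, (red l').reduce_eq] at this
  refine List.map_injective_iff.2 ?_ this
  intro a b e
  simpa using e

lemma ball_mono (S : Set G) {m n : ℕ} (h : m ≤ n) : ball S m ⊆ ball S n := by
  rintro g ⟨l, h1, h2, h3⟩
  exact ⟨l, h1, h2.trans h, h3⟩

lemma rate_pos {S : Set G} (hf : S.Finite) (hs : S⁻¹ = S) (hc : Subgroup.closure S = ⊤)
    (j : FreeGroup Bool →* G) (hj : Function.Injective j) :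
    ∃ lam : ℝ, 0 < lam ∧ HasGrowthRate S lam := by
  obtain ⟨lam, h, -⟩ := exists_rate hf hs hc
  refine ⟨lam, ?_, h⟩
  set L := max 1 (max (wordNorm S (j (FreeGroup.of true))) (wordNorm S (j (FreeGroup.of false))))
    with hL
  have hL1 : 1 ≤ L := le_max_left _ _
  have hx : ∀ b : Bool, j (FreeGroup.of b) ∈ ball S L := by
    intro b
    rw [← norm_le_iff hs hc]
    cases b
    · exact (le_max_right _ _).trans (le_max_right _ _)
    · exact (le_max_left _ _).trans (le_max_right _ _)
  have hw : ∀ l : List Bool, j (l.map FreeGroup.of).prod ∈ ball S (L * l.length) := by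
    intro l
    induction l with
    | nil => simpa using one_mem_ball S 0
    | cons b l ih =>
      rw [List.map_cons, List.prod_cons, map_mul, List.length_cons, mul_add_one, add_comm, ball_mul]
      exact Set.mul_mem_mul (hx b) ih
  have hv : ∀ n : ℕ, 2 ^ n ≤ growthFn S (L * n) := by
    intro n
    rw [growthFn_eq hs hc]
    have := (ball_finite hf (L * n)).to_subtype
    let F : (Fin n → Bool) → ball S (L * n) := fun f =>
      ⟨j ((List.ofFn f).map FreeGroup.of).prod, by simpa using hw (List.ofFn f)⟩
    have hF : Function.Injective F := by
      intro f g e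
      have := pos_word_inj (hj (congrArg Subtype.val e))
      exact List.ofFn_injective this
    have := Nat.card_le_card_of_injective F hF
    simpa using this
  have ht : Filter.Tendsto (fun n : ℕ => L * n) Filter.atTop Filter.atTop :=
    Filter.tendsto_id.const_mul_atTop' (by omega)
  have h2 := h.comp ht
  have hLr : (0 : ℝ) < L := by exact_mod_cast hL1
  have : Real.log 2 / L ≤ lam := by
    refine ge_of_tendsto h2 ?_
    filter_upwards [Filter.eventually_gt_atTop 0] with n hn
    have hn' : (0 : ℝ) < n := by exact_mod_cast hn
    simp only [Function.comp_apply]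
    push_cast
    rw [div_le_div_iff₀ hLr (by positivity)]
    have h3 : (n : ℝ) * Real.log 2 ≤ Real.log (growthFn S (L * n) : ℝ) := by
      rw [← Real.log_pow]
      exact Real.log_le_log (by positivity) (by exact_mod_cast hv n)
    nlinarith
  exact lt_of_lt_of_le (div_pos (Real.log_pos (by norm_num)) hLr) this

end Growth

section Final

lemma numerics {η : ℝ} (hη : 0 < η) (hroot : η ^ 3 - η ^ 2 - 2 * η - 4 = 0) :
    2 < η ∧ 0 < 2 / η ∧ 2 / η < 1 ∧ (2 / η) ^ 3 + (2 / η) ^ 2 + 2 / η = 2 ∧ 2 / η * η = 2 := by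
  have h2 : 2 < η := by
    by_contra h
    push Not at h
    nlinarith [mul_nonneg hη.le (sub_nonneg.2 h), sq_nonneg η, mul_nonneg (sq_nonneg η) (sub_nonneg.2 h)]
  refine ⟨h2, by positivity, by rw [div_lt_one hη]; exact h2, ?_, by field_simp⟩
  field_simp
  linarith

variable {A : Type} [Group A] {Y : Type}

/-- the generating set of the group `WW t` coming from a truncated sequence -/
def SS (t : ℕ → (A →* Perm Y)) (n : ℕ) : Set (WW t) := {g | (g : Perm (X × Y)) ∈ gens (tr n t)}

lemma gens_finite [Finite A] (t : ℕ → (A →* Perm Y)) : (gens t).Finite :=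
  (Set.finite_range _).insert _

lemma gens_inv (t : ℕ → (A →* Perm Y)) (g : Perm (X × Y)) (h : g ∈ gens t) : g⁻¹ ∈ gens t := by
  rcases h with rfl | ⟨v, rfl⟩
  · left
    exact inv_eq_of_mul_eq_one_left aL_sq
  · right
    exact ⟨v⁻¹, map_inv _ _⟩

lemma SS_finite [Finite A] (t : ℕ → (A →* Perm Y)) (n : ℕ) : (SS t n).Finite :=
  (gens_finite (tr n t)).preimage Subtype.val_injective.injOn

lemma SS_inv (t : ℕ → (A →* Perm Y)) (n : ℕ) : (SS t n)⁻¹ = SS t n := by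
  ext g
  rw [Set.mem_inv]
  constructor
  · intro h
    have := gens_inv _ _ h
    simpa [SS] using this
  · intro h
    exact gens_inv _ _ h

lemma closure_top {P : Type*} [Group P] (k : Set P) (U : Subgroup P) (h : Subgroup.closure k = U) :
    Subgroup.closure ((fun g : U => (g : P)) ⁻¹' k) = ⊤ := by
  subst h
  exact Subgroup.closure_closure_coe_preimage

lemma SS_closure (hA : commutator A = ⊤) (t : ℕ → (A →* Perm Y))
    (ht : ∀ n, ∃ m, n < m ∧ t m = t n) (n : ℕ) : Subgroup.closure (SS t n) = ⊤ :=
  closure_top _ _ (WW_eq hA t ht n)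

lemma growthFnR_eq {G : Type*} [Group G] (S : Set G) {r : ℝ} (hr : 0 ≤ r) :
    growthFnR S r = growthFn S ⌊r⌋₊ :=
  Nat.card_congr (Equiv.subtypeEquivRight fun _ => (Nat.le_floor_iff hr).symm)

lemma growth_SS [Fintype A] (hA : commutator A = ⊤) (t : ℕ → (A →* Perm Y))
    (ht : ∀ n, ∃ m, n < m ∧ t m = t n) {η : ℝ} (hη : 0 < η)
    (hroot : η ^ 3 - η ^ 2 - 2 * η - 4 = 0) (M : ℝ)
    (hM : M = (2 * (Fintype.card (K4 × A) : ℝ)) ^ (⌈2 / (1 - (2 / η) ^ 3)⌉₊ + 1))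
    (n k : ℕ) (hk : k ≤ n) (r : ℝ) (hr0 : 0 ≤ r) (hr : r ≤ η ^ k) :
    (growthFnR (SS t n) r : ℝ) ≤ M ^ (2 ^ (k + 1) - 1) := by
  obtain ⟨h2, h0, h1, hθ, he⟩ := numerics hη hroot
  obtain ⟨f1, f2⟩ := ball_bound h0 h1 hθ η h2 he M hM k (tr n t)
    (fun j hj => if_pos (lt_of_lt_of_le hj hk)) r hr
  refine le_trans ?_ f2
  rw [growthFnR_eq _ hr0, growthFn_eq (SS_inv t n) (SS_closure hA t ht n)]
  rw [Nat.card_coe_set_eq]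
  have := Set.ncard_le_ncard_of_injOn (s := ball (SS t n) ⌊r⌋₊) (fun g : WW t => (g : Perm (X × Y)))
    (t := {g : Perm (X × Y) | ∃ l : List (Perm (X × Y)), (∀ s ∈ l, s ∈ gens (tr n t)) ∧
      (l.length : ℝ) ≤ r ∧ l.prod = g}) ?_ Subtype.val_injective.injOn f1
  · exact_mod_cast this
  · rintro g ⟨l, hl, h, rfl⟩
    refine ⟨l.map Subtype.val, ?_, ?_, ?_⟩
    · intro s hs
      obtain ⟨u, hu, rfl⟩ := List.mem_map.1 hs
      exact hl u hu
    · rw [List.length_map]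
      exact (Nat.le_floor_iff hr0).1 h
    · exact (map_list_prod (WW t).subtype l).symm

lemma growth_exp [Fintype A] (hA : commutator A = ⊤) (t : ℕ → (A →* Perm Y))
    (ht : ∀ n, ∃ m, n < m ∧ t m = t n) {η : ℝ} (hη : 0 < η)
    (hroot : η ^ 3 - η ^ 2 - 2 * η - 4 = 0) :
    ∃ K : ℝ, 0 ≤ K ∧ ∀ R : ℝ, 0 < R → ∃ n, ∀ r : ℝ, 0 ≤ r → r ≤ R →
      (growthFnR (SS t n) r : ℝ) ≤ Real.exp (K * r ^ (Real.log 2 / Real.log η)) := by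
  obtain ⟨h2, h0, h1, hθ, he⟩ := numerics hη hroot
  obtain ⟨M, hM⟩ : ∃ M : ℝ, M = (2 * (Fintype.card (K4 × A) : ℝ)) ^ (⌈2 / (1 - (2 / η) ^ 3)⌉₊ + 1) :=
    ⟨_, rfl⟩
  have hM1 : 1 ≤ M := by
    have hq : (1 : ℝ) ≤ Fintype.card (K4 × A) := by exact_mod_cast Fintype.card_pos
    rw [hM]
    exact one_le_pow₀ (by linarith)
  have hlη : 0 < Real.log η := Real.log_pos (by linarith)
  have hlM : 0 ≤ Real.log M := Real.log_nonneg hM1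
  refine ⟨4 * Real.log M, by positivity, fun R hR => ⟨⌈Real.log R / Real.log η⌉₊, fun r hr0 hrR => ?_⟩⟩
  set n := ⌈Real.log R / Real.log η⌉₊ with hn
  rcases lt_or_ge r 1 with hr | hr
  · have e : growthFnR (SS t n) r = 1 := by
      rw [growthFnR_eq _ hr0, growthFn_eq (SS_inv t n) (SS_closure hA t ht n),
        Nat.floor_eq_zero.2 hr]
      have : ball (SS t n) 0 = {1} := by
        ext g
        constructor
        · rintro ⟨l, -, h, rfl⟩
          have : l = [] := by simpa using h
          simp [this]
        · rintro rfl
          exact one_mem_ball _ _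
      rw [this]
      simp
    rw [e, Nat.cast_one]
    exact Real.one_le_exp (by positivity)
  · have hr' : 0 < r := by linarith
    set k := ⌈Real.log r / Real.log η⌉₊ with hk
    have hkn : k ≤ n := by
      refine Nat.ceil_mono ?_
      gcongr
    have hrk : r ≤ η ^ k := by
      rw [← Real.log_le_log_iff hr' (by positivity), Real.log_pow, ← div_le_iff₀ hlη]
      exact Nat.le_ceil _
    refine (growth_SS hA t ht hη hroot M hM n k hkn r hr0 hrk).trans ?_
    have hlr : 0 ≤ Real.log r / Real.log η := div_nonneg (Real.log_nonneg hr) hlη.le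
    have hk2 : (2 : ℝ) ^ k ≤ 2 * r ^ (Real.log 2 / Real.log η) := by
      have h3 : (k : ℝ) ≤ Real.log r / Real.log η + 1 := (Nat.ceil_lt_add_one hlr).le
      rw [← Real.rpow_natCast 2 k]
      refine (Real.rpow_le_rpow_of_exponent_le (by norm_num) h3).trans_eq ?_
      rw [Real.rpow_add (by norm_num), Real.rpow_one, mul_comm, Real.rpow_def_of_pos (by norm_num),
        Real.rpow_def_of_pos hr']
      congr 2
      ring
    have hk3 : ((2 ^ (k + 1) - 1 : ℕ) : ℝ) ≤ 4 * r ^ (Real.log 2 / Real.log η) := by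
      have : ((2 ^ (k + 1) - 1 : ℕ) : ℝ) ≤ ((2 ^ (k + 1) : ℕ) : ℝ) := by
        exact_mod_cast Nat.sub_le _ _
      refine this.trans ?_
      push_cast
      rw [pow_succ]
      linarith
    rw [← Real.log_le_iff_le_exp (by positivity), Real.log_pow]
    calc _ ≤ (4 * r ^ (Real.log 2 / Real.log η)) * Real.log M := by gcongr
      _ = _ := by ring

/-- the embedding of a group into `WW t` -/
lemma exists_emb (hA : commutator A = ⊤) (t : ℕ → (A →* Perm Y)) (B : Type) [Group B]
    (φ : B →* Perm Y) (hφ : Function.Injective φ)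
    (hU : ∀ b, ∀ U : Subgroup (Perm Y), (∀ m x, t m x ∈ U) → φ b ∈ U) :
    ∃ ψ : B →* WW t, Function.Injective ψ := by
  let f : Perm Y →* Perm (X × Y) := (D X Y).comp (MonoidHom.mulSingle (fun _ : X => Perm Y) (pt 0 true))
  have hf : Function.Injective f := D_injective.comp 
    (Pi.mulSingle_injective (M := fun _ : X => Perm Y) (pt 0 true))
  refine ⟨(f.comp φ).codRestrict (WW t) ?_, ?_⟩
  · intro b
    exact hU b ((WW t).comap f) (fun m x => WW_single hA t m x)
  · intro a b e
    exact hφ (hf (congrArg Subtype.val e))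

end Final

end NUG

/-- **Groups of non-uniform exponential growth**: let `η₊` be the positive root of
`T³ − T² − 2T − 4` and `α = log 2 / log η₊`.  Every countable group `B` embeds in a
finitely generated group `W` such that: for every finite symmetric generating set `S`
of `W` the entropy `λ_{W,S}` is strictly positive; yet the infimum of the entropies over
all finite symmetric generating sets is `0` (for every `ε > 0` there is a generating set
with entropy `< ε`).  Moreover `W` may be chosen so that for some constant `K`, for every
`R > 0` there is a finite symmetric generating set `S` of `W` with
`v_{W,S}(r) ≤ exp(K·r^α)` for all `r ∈ [0, R]`. -/
theorem exists_nonuniform_exponential_growth_embedding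
    (η : ℝ) (hη : 0 < η) (hroot : η ^ 3 - η ^ 2 - 2 * η - 4 = 0)
    (B : Type*) [Group B] [Countable B] :
    ∃ (W : Type) (_ : Group W),
      (∃ S : Set W, S.Finite ∧ S⁻¹ = S ∧ Subgroup.closure S = ⊤) ∧
      (∃ φ : B →* W, Function.Injective φ) ∧
      (∀ S : Set W, S.Finite → S⁻¹ = S → Subgroup.closure S = ⊤ →
        ∃ lam : ℝ, 0 < lam ∧ HasGrowthRate S lam) ∧
      (∀ ε : ℝ, 0 < ε →
        ∃ S : Set W, S.Finite ∧ S⁻¹ = S ∧ Subgroup.closure S = ⊤ ∧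
          ∃ lam : ℝ, lam < ε ∧ HasGrowthRate S lam) ∧
      (∃ K : ℝ, ∀ R : ℝ, 0 < R →
        ∃ S : Set W, S.Finite ∧ S⁻¹ = S ∧ Subgroup.closure S = ⊤ ∧
          ∀ r : ℝ, 0 ≤ r → r ≤ R →
            (growthFnR S r : ℝ) ≤ Real.exp (K * r ^ (Real.log 2 / Real.log η))) := by
  classical
  obtain ⟨h2, -, -, -, -⟩ := NUG.numerics hη hroot
  have : Countable (Shrink.{0} B) := (equivShrink.{0} B).symm.injective.countable
  obtain ⟨Y, t, ht, φ, hφ, hU⟩ := NUG.exists_seq (Shrink.{0} B × FreeGroup Bool)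
  obtain ⟨ψ, hψ⟩ := NUG.exists_emb NUG.A5_perfect t _ φ hφ hU
  obtain ⟨K, hK, hgr⟩ := NUG.growth_exp NUG.A5_perfect t ht hη hroot
  have hfin := NUG.SS_finite t
  have hinv := NUG.SS_inv t
  have hcl := NUG.SS_closure NUG.A5_perfect t ht
  refine ⟨NUG.WW t, inferInstance, ⟨NUG.SS t 0, hfin 0, hinv 0, hcl 0⟩, ?_, ?_, ?_, ?_⟩
  · refine ⟨ψ.comp ((MonoidHom.inl (Shrink.{0} B) (FreeGroup Bool)).comp
      (Shrink.mulEquiv.{0} (α := B)).symm.toMonoidHom), ?_⟩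
    intro a b e
    exact (Shrink.mulEquiv.{0} (α := B)).symm.injective (congrArg Prod.fst (hψ e))
  · intro S hf hs hc
    refine NUG.rate_pos hf hs hc (ψ.comp (MonoidHom.inr (Shrink.{0} B) (FreeGroup Bool))) ?_
    refine hψ.comp ?_
    intro a b e
    exact congrArg Prod.snd e
  · intro ε hε
    have hlη : 0 < Real.log η := Real.log_pos (by linarith)
    set α := Real.log 2 / Real.log η with hα
    have hα1 : α < 1 := by
      rw [hα, div_lt_one hlη]
      exact Real.log_lt_log (by norm_num) h2
    have htend : Filter.Tendsto (fun n : ℕ => K * (n : ℝ) ^ (-(1 - α))) Filter.atTop (nhds 0) := by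
      have := ((tendsto_rpow_neg_atTop (y := 1 - α) (by linarith)).comp
        tendsto_natCast_atTop_atTop).const_mul K
      simpa using this
    obtain ⟨n, hn1, hn2⟩ := ((htend.eventually (gt_mem_nhds hε)).and
      (Filter.eventually_gt_atTop 0)).exists
    have hn : (0 : ℝ) < n := by exact_mod_cast hn2
    obtain ⟨m, hm⟩ := hgr n hn
    obtain ⟨lam, hl, hle⟩ := NUG.exists_rate (hfin m) (hinv m) (hcl m)
    refine ⟨NUG.SS t m, hfin m, hinv m, hcl m, lam, ?_, hl⟩
    refine lt_of_le_of_lt ((hle n hn2.ne').trans ?_) hn1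
    have h3 := hm n hn.le le_rfl
    rw [NUG.growthFnR_eq _ hn.le, Nat.floor_natCast] at h3
    have hp : (0 : ℝ) < growthFn (NUG.SS t m) n := by
      exact_mod_cast NUG.growthFn_pos (hfin m) (hinv m) (hcl m) n
    rw [← Real.log_le_iff_le_exp hp] at h3
    rw [div_le_iff₀ hn]
    refine h3.trans_eq ?_
    rw [mul_assoc, ← Real.rpow_add_one hn.ne']
    congr 2
    ring
  · refine ⟨K, fun R hR => ?_⟩
    obtain ⟨n, hn⟩ := hgr R hR
    exact ⟨NUG.SS t n, hfin n, hinv n, hcl n, hn⟩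
end

section
/- Torsion-generated HNN embedding: Let p ≥ 5 be an integer. Then every countable group B embeds as a subgroup of a group W that is generated by two elements each of order exactly p. -/
namespace TwoGen
open RegularWreathProduct

/-- The base group of the wreath product. -/
def bs {D Q : Type*} [Group D] [Group Q] : (Q → D) →* D ≀ᵣ Q where
  toFun F := ⟨F, 1⟩
  map_one' := rfl
  map_mul' F F' := by
    ext <;> simp

theorem bs_inj {D Q : Type*} [Group D] [Group Q] :
    Function.Injective (bs : (Q → D) →* D ≀ᵣ Q) := fun _ _ h =>
  congrArg RegularWreathProduct.left h

theorem bs_comm {D Q : Type*} [Group D] [Group Q] (F F' : Q → D) :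
    (bs F : D ≀ᵣ Q) * bs F' * (bs F)⁻¹ * (bs F')⁻¹ = bs (F * F' * F⁻¹ * F'⁻¹) := by
  simp only [map_mul, map_inv]

theorem conj_bs {D Q : Type*} [Group D] [Group Q] (q : Q) (F : Q → D) :
    (inl q : D ≀ᵣ Q) * bs F * (inl q)⁻¹ = bs (fun i => F (q⁻¹ * i)) := by
  ext <;> simp [bs]

theorem comm_mem {G : Type*} [Group G] (N : Subgroup G) (a b : G)
    (hab : a * b * a⁻¹ * b⁻¹ ∈ N) (ha : ∀ g ∈ N, a * g * a⁻¹ ∈ N)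
    (hb : ∀ g ∈ N, b * g * b⁻¹ ∈ N) (s : ℕ) :
    (a ^ s * b * (a ^ s)⁻¹) * b * (a ^ s * b * (a ^ s)⁻¹)⁻¹ * b⁻¹ ∈ N := by
  have h1 : ∀ s : ℕ, a ^ s * b * (a ^ s)⁻¹ * b⁻¹ ∈ N := by
    intro s
    induction s with
    | zero => simp
    | succ n ih =>
      have := N.mul_mem (ha _ ih) hab
      convert this using 1
      rw [pow_succ']
      group
  have := N.mul_mem (h1 s) (hb _ (N.inv_mem (h1 s)))
  convert this using 1
  group

/-- Step 1: `B` embeds in the group in a strong way. -/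
theorem step_one (B : Type) [Group B] [Countable B] :
    ∃ (G : Type) (_ : Group G) (a b : G) (φ : B →* G), Function.Injective φ ∧
      ∀ c, ∃ s : ℕ, φ c =
        (a ^ s * b * (a ^ s)⁻¹) * b * (a ^ s * b * (a ^ s)⁻¹)⁻¹ * b⁻¹ := by
  classical
  obtain ⟨e, he⟩ := exists_surjective_nat B
  let d : (B ≀ᵣ (Multiplicative ℤ)) := inl (Multiplicative.ofAdd 1)
  let c : B → (B ≀ᵣ (Multiplicative ℤ)) := fun g => bs (fun m => if 0 ≤ m.toAdd then g else 1)
  have hcd : ∀ g, c g * d * (c g)⁻¹ * d⁻¹ = bs (Pi.mulSingle 1 g) := by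
    intro g
    have h1 : c g * d * (c g)⁻¹ * d⁻¹ = c g * (d * c g * d⁻¹)⁻¹ := by group
    rw [h1, conj_bs, ← map_inv, ← map_mul]
    congr 1
    funext m
    obtain ⟨m, rfl⟩ := Multiplicative.ofAdd.surjective m
    simp only [Pi.mul_apply, Pi.inv_apply, Pi.mulSingle_apply, toAdd_mul, toAdd_inv, toAdd_ofAdd,
      ofAdd_eq_one]
    split_ifs <;> first | omega | simp
  let F : (Multiplicative ℤ) → (B ≀ᵣ (Multiplicative ℤ)) := fun i => if i.toAdd = 0 then d else
    if Odd i.toAdd ∧ i.toAdd < 0 then c (e (i.toAdd.natAbs / 2)) else 1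
  let t : (B ≀ᵣ (Multiplicative ℤ)) ≀ᵣ (Multiplicative ℤ) := inl (Multiplicative.ofAdd 1)
  refine ⟨(B ≀ᵣ (Multiplicative ℤ)) ≀ᵣ (Multiplicative ℤ), inferInstance, t, bs F,
    bs.comp ((MonoidHom.mulSingle (fun _ : (Multiplicative ℤ) => (B ≀ᵣ (Multiplicative ℤ))) 1).comp
      (bs.comp (MonoidHom.mulSingle (fun _ : (Multiplicative ℤ) => B) 1))), ?_, ?_⟩
  · exact bs_inj.comp ((Pi.mulSingle_injective (M := fun _ : (Multiplicative ℤ) => (B ≀ᵣ (Multiplicative ℤ))) 1).comp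
      (bs_inj.comp (Pi.mulSingle_injective (M := fun _ : (Multiplicative ℤ) => B) 1)))
  · intro g
    obtain ⟨n, rfl⟩ := he g
    refine ⟨2 * n + 1, ?_⟩
    have ht : t ^ (2 * n + 1) = inl (Multiplicative.ofAdd (2 * n + 1 : ℤ)) := by
      simp only [t]
      rw [← map_pow, ← ofAdd_nsmul]
      congr 2
      simp
    rw [ht, conj_bs, bs_comm]
    simp only [MonoidHom.comp_apply, MonoidHom.mulSingle_apply, ← hcd]
    congr 1
    funext i
    obtain ⟨i, rfl⟩ := Multiplicative.ofAdd.surjective i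
    simp only [Pi.mul_apply, Pi.inv_apply, Pi.mulSingle_apply, ofAdd_eq_one]
    by_cases hi : i = 0
    · subst hi
      have h1 : F (Multiplicative.ofAdd 0) = d := by simp [F]
      have h2 : F ((Multiplicative.ofAdd (2 * n + 1 : ℤ))⁻¹ * Multiplicative.ofAdd 0)
          = c (e n) := by
        simp only [F, toAdd_mul, toAdd_inv, toAdd_ofAdd]
        rw [if_neg (by omega), if_pos ⟨by rw [Int.odd_iff]; omega, by omega⟩]
        congr 2
        omega
      rw [h1, h2]
      simp
    · rw [if_neg hi]
      by_cases ho : Odd i ∧ i < 0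
      · have h2 : F ((Multiplicative.ofAdd (2 * n + 1 : ℤ))⁻¹ * Multiplicative.ofAdd i) = 1 := by
          simp only [F, toAdd_mul, toAdd_inv, toAdd_ofAdd]
          rw [Int.odd_iff] at ho
          rw [if_neg (by omega), if_neg (by rw [Int.odd_iff]; omega)]
        rw [h2]; simp
      · have h2 : F (Multiplicative.ofAdd i) = 1 := by
          simp only [F, toAdd_ofAdd]
          rw [if_neg hi, if_neg ho]
        rw [h2]; simp

/-- Step 2. -/
theorem step_two (p : ℕ) (hp : 5 ≤ p) (G : Type) [Group G] (t f : G) :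
    ∃ (P : Type) (_ : Group P) (x y : P) (D : G →* P), orderOf x = p ∧ orderOf y = p ∧
      Function.Injective D ∧
      ∀ s : ℕ, D ((t ^ s * f * (t ^ s)⁻¹) * f * (t ^ s * f * (t ^ s)⁻¹)⁻¹ * f⁻¹) ∈
        Subgroup.closure {x, y} := by
  classical
  let x : G ≀ᵣ (Multiplicative (ZMod p)) := inl (Multiplicative.ofAdd 1)
  let K : (Multiplicative (ZMod p)) → G := fun i => if i.toAdd = 0 then f else if i.toAdd = 1 then t⁻¹ else 1
  let k : G ≀ᵣ (Multiplicative (ZMod p)) := bs K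
  let y := k * x * k⁻¹
  let D : G →* G ≀ᵣ (Multiplicative (ZMod p)) := bs.comp (MonoidHom.mulSingle (fun _ : (Multiplicative (ZMod p)) => G) 1)
  have hx : orderOf x = p := by
    have : orderOf x = orderOf (Multiplicative.ofAdd (1 : ZMod p)) :=
      orderOf_injective inl (fun a b h => congrArg RegularWreathProduct.right h) _
    rw [this, orderOf_ofAdd_eq_addOrderOf, ZMod.addOrderOf_one]
  have hne : ∀ m : ℕ, 0 < m → m < 5 → (m : ZMod p) ≠ 0 := by
    intro m h1 h2 h
    rw [ZMod.natCast_eq_zero_iff] at h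
    have := Nat.le_of_dvd h1 h
    omega
  have n1 : (1 : ZMod p) ≠ 0 := by simpa using hne 1
  have n2 : (2 : ZMod p) ≠ 0 := by simpa using hne 2
  have n3 : (3 : ZMod p) ≠ 0 := by simpa using hne 3
  have n4 : (4 : ZMod p) ≠ 0 := by simpa using hne 4
  refine ⟨G ≀ᵣ (Multiplicative (ZMod p)), inferInstance, x, y, D, hx, ?_, ?_, ?_⟩
  · have : y = MulAut.conj k x := rfl
    rw [this, MulEquiv.orderOf_eq, hx]
  · exact bs_inj.comp (Pi.mulSingle_injective (M := fun _ : (Multiplicative (ZMod p)) => G) 1)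
  · set W := Subgroup.closure {x, y} with hW
    have hxW : x ∈ W := Subgroup.subset_closure (by simp)
    have hyW : y ∈ W := Subgroup.subset_closure (by simp)
    let u : (Multiplicative (ZMod p)) → G := fun i => K i * (K (Multiplicative.ofAdd (-1) * i))⁻¹
    have hu : bs u ∈ W := by
      have h1 : bs u = y * x⁻¹ := by
        have h2 : y * x⁻¹ = k * (x * k * x⁻¹)⁻¹ := by simp only [y]; group
        rw [h2, conj_bs, ← map_inv, ← map_mul]
        rfl
      rw [h1]
      exact W.mul_mem hyW (W.inv_mem hxW)
    let v : (Multiplicative (ZMod p)) → G := fun i => u (Multiplicative.ofAdd 2 * i)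
    have hv : bs v ∈ W := by
      have h1 : bs v = (inl (Multiplicative.ofAdd (-2 : ZMod p)) : G ≀ᵣ (Multiplicative (ZMod p))) * bs u *
          (inl (Multiplicative.ofAdd (-2)))⁻¹ := by
        rw [conj_bs]
        simp [v]
      have h2 : (inl (Multiplicative.ofAdd (-2 : ZMod p)) : G ≀ᵣ (Multiplicative (ZMod p))) = x⁻¹ * x⁻¹ := by
        simp only [x]
        rw [← map_inv, ← map_mul, ← ofAdd_neg, ← ofAdd_add]
        congr 2
        ring
      rw [h1, h2]
      have h3 := W.mul_mem (W.inv_mem hxW) (W.inv_mem hxW)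
      exact W.mul_mem (W.mul_mem h3 hu) (W.inv_mem h3)
    have u_def : ∀ i : ZMod p, u (Multiplicative.ofAdd i) =
        (if i = 0 then f else if i = 1 then t⁻¹ else 1) *
        (if i = 1 then f else if i = 2 then t⁻¹ else 1)⁻¹ := by
      intro i
      have e1 : -1 + i = 0 ↔ i = 1 := by grind
      have e2 : -1 + i = 1 ↔ i = 2 := by grind
      simp only [u, K, toAdd_mul, toAdd_ofAdd, e1, e2]
    have u0 : u 1 = f := by
      rw [← ofAdd_zero, u_def]
      simp [n1.symm, n2.symm]
    have n21 : (2 : ZMod p) ≠ 1 := by grind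
    have u2 : v 1 = t := by
      have : v 1 = u (Multiplicative.ofAdd 2) := by simp [v]
      rw [this, u_def]
      simp [n2, n21]
    have huv : ∀ i : (Multiplicative (ZMod p)), i ≠ 1 → v i = 1 ∨ u i = 1 := by
      intro i hi
      obtain ⟨i, rfl⟩ := Multiplicative.ofAdd.surjective i
      rw [Ne, ofAdd_eq_one] at hi
      by_cases h1 : i = 1
      · left
        have : v (Multiplicative.ofAdd i) = u (Multiplicative.ofAdd (2 + i)) := rfl
        rw [this, u_def, if_neg (by grind), if_neg (by grind), if_neg (by grind),
          if_neg (by grind)]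
        simp
      by_cases h2 : i = 2
      · left
        have : v (Multiplicative.ofAdd i) = u (Multiplicative.ofAdd (2 + i)) := rfl
        rw [this, u_def, if_neg (by grind), if_neg (by grind), if_neg (by grind),
          if_neg (by grind)]
        simp
      · right
        rw [u_def]
        simp [hi, h1, h2]
    have hconj : ∀ w : (Multiplicative (ZMod p)) → G, bs w ∈ W → ∀ g ∈ W.comap D, w 1 * g * (w 1)⁻¹ ∈ W.comap D := by
      intro w hw g hg
      rw [Subgroup.mem_comap] at hg ⊢
      have := W.mul_mem (W.mul_mem hw hg) (W.inv_mem hw)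
      convert this using 1
      simp only [D, MonoidHom.comp_apply, MonoidHom.mulSingle_apply]
      rw [← map_inv, ← map_mul, ← map_mul]
      congr 1
      funext i
      simp only [Pi.mul_apply, Pi.inv_apply, Pi.mulSingle_apply]
      split_ifs with h
      · rw [h]
      · simp
    intro s
    have := comm_mem (W.comap D) t f ?_ (u2 ▸ hconj v hv) (u0 ▸ hconj u hu) s
    · exact this
    · rw [Subgroup.mem_comap]
      have := W.mul_mem (W.mul_mem (W.mul_mem hv hu) (W.inv_mem hv)) (W.inv_mem hu)
      convert this using 1
      simp only [D, MonoidHom.comp_apply, MonoidHom.mulSingle_apply]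
      rw [← map_inv, ← map_inv, ← map_mul, ← map_mul, ← map_mul]
      congr 1
      funext i
      simp only [Pi.mul_apply, Pi.inv_apply, Pi.mulSingle_apply]
      split_ifs with h
      · rw [h, u0, u2]
      · rcases huv i h with h | h <;> simp [h]

end TwoGen

/-- **Torsion-generated HNN embedding**: for every integer `p ≥ 5`, every countable group
embeds as a subgroup of a group generated by two elements each of order exactly `p`. -/
theorem countable_embeds_in_two_generated_of_order_p (p : ℕ) (hp : 5 ≤ p)
    (B : Type*) [Group B] [Countable B] :
    ∃ (W : Type) (_ : Group W) (x y : W),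
      orderOf x = p ∧ orderOf y = p ∧
      Subgroup.closure {x, y} = (⊤ : Subgroup W) ∧
      ∃ φ : B →* W, Function.Injective φ := by
  have : Small.{0} B := inferInstance
  have : Countable (Shrink.{0} B) := (equivShrink B).symm.injective.countable
  obtain ⟨G, _, t, f, φ, hφ, h⟩ := TwoGen.step_one (Shrink.{0} B)
  obtain ⟨P, _, x, y, D, hx, hy, hD, hs⟩ := TwoGen.step_two p hp G t f
  have hxW : x ∈ Subgroup.closure {x, y} := Subgroup.subset_closure (by simp)
  have hyW : y ∈ Subgroup.closure {x, y} := Subgroup.subset_closure (by simp)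
  refine ⟨Subgroup.closure {x, y}, inferInstance, ⟨x, hxW⟩, ⟨y, hyW⟩, ?_, ?_, ?_, ?_⟩
  · rw [Subgroup.orderOf_mk, hx]
  · rw [Subgroup.orderOf_mk, hy]
  · rw [← Subgroup.closure_closure_coe_preimage]
    congr 1
    ext z
    simp [Subtype.ext_iff]
  · have hmem : ∀ c, D (φ c) ∈ Subgroup.closure {x, y} := by
      intro c
      obtain ⟨s, hc⟩ := h c
      rw [hc]
      exact hs s
    refine ⟨((D.comp φ).codRestrict _ hmem).comp
      (Shrink.mulEquiv (α := B)).symm.toMonoidHom, ?_⟩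
    have h1 : Function.Injective ((D.comp φ).codRestrict _ hmem) := by
      intro a b hab
      exact hφ (hD (congrArg Subtype.val hab))
    exact h1.comp (Shrink.mulEquiv (α := B)).symm.injective
end
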